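/- arXiv:2206.11001 — 2 statements merged into one kernel-verified Lean document; each statement's English description precedes it below -/
import Mathlib

section
/- Let A and B be reduced orders and let G and H be finite abelian groups. Then the group rings A[G] and B[H] are isomorphic as rings if and only if there exist an order C and finite abelian groups I and J such that A is isomorphic to C[I] as rings, B is isomorphic to C[J] as rings, and I × G is isomorphic to J × H as groups. -/
/-!
The units of finite order of `B[H]` are controlled by positivity. Every complex character of `B[H]`
sends a unit `u` of finite order and its inverse to conjugate numbers, so Fourier inversion gives
`∑ h, ‖σ (u h)‖ ^ 2 = 1` for each embedding `σ : B →+* ℂ`. The elements `u h * u⁻¹ h⁻¹` are thus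
integral with all conjugates in `[0, 1]`, which forces them to be orthogonal idempotents with sum
`1`. The same positivity shows that the idempotents of `B[H]` lie in `B`. Cutting `A` and `B` along
these idempotents, one may assume that an isomorphism `A[G] ≃+* B[H]` and its inverse send group
elements to multiples of group elements, inducing `d : G →* H` and `d' : H →* G`.

If `d' ∘ d` has no nontrivial fixed points, then `g ↦ g / d' (d g)` is an automorphism of `G`, and
twisting by it and its analogue for `H` makes `G` correspond to units of `B` and `H` to units of
`A`. Dividing `B` by the relations `u = 1` for the units `u` in the image of `G` yields `C` with
`A ≃+* C[H]` and `B ≃+* C[G]`. If `d' ∘ d` does have a nontrivial fixed point, an idempotent power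
of it exhibits a common direct factor of `G` and `H`. An indecomposable one, `P`, can be cancelled:
when `G = H = P`, either `d` is bijective and yields `A ≃+* B`, or the first case applies and
`A ≃+* C[P] ≃+* B`.
-/

open MonoidAlgebra ComplexConjugate

universe u v w x

section ComplexEmbeddings

theorem exists_ringHom_complex_one_le_norm_of_field {F : Type*} [Field F] [CharZero F]
    [Algebra.IsAlgebraic ℚ F] {y : F} (hy : IsIntegral ℤ y) (hy0 : y ≠ 0) :
    ∃ σ : F →+* ℂ, 1 ≤ ‖σ y‖ := by
  let K := IntermediateField.adjoin ℚ {y}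
  have : FiniteDimensional ℚ K := IntermediateField.adjoin.finiteDimensional hy.tower_top
  have : NumberField K := ⟨⟩
  let z : K := IntermediateField.AdjoinSimple.gen ℚ y
  have hz : IsIntegral ℤ z := (isIntegral_algebraMap_iff (algebraMap K F).injective).1 hy
  obtain ⟨τ, hτ⟩ := NumberField.exists_conjugate_one_le_norm (K := K) (α := ⟨z, hz⟩)
    fun h ↦ hy0 (congrArg (algebraMap K F) (congrArg Subtype.val h))
  let _ : Algebra K ℂ := τ.toAlgebra
  have : Algebra.IsAlgebraic K F := Algebra.IsAlgebraic.tower_top (K := ℚ) K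
  let σ : F →ₐ[K] ℂ := IsAlgClosed.lift
  exact ⟨σ, hτ.trans_eq (congrArg _ (σ.commutes z).symm)⟩

theorem exists_ringHom_complex_one_le_norm_of_surjective {B D : Type*} [CommRing B]
    [Algebra.IsIntegral ℤ B] [CommRing D] [IsDomain D] [CharZero D] {f : B →+* D}
    (hf : Function.Surjective f) {x : B} (hx : f x ≠ 0) : ∃ σ : B →+* ℂ, 1 ≤ ‖σ x‖ := by
  -- A generic fraction field `F` has only one `ℤ`-algebra structure, unlike `FractionRing D`.
  suffices ∀ (F : Type _) [Field F] [Algebra D F] [IsFractionRing D F],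
      ∃ σ : B →+* ℂ, 1 ≤ ‖σ x‖ from this (FractionRing D)
  intro F _ _ _
  have : Algebra.IsIntegral ℤ D := .of_surjective f.toIntAlgHom hf
  have : CharZero F := charZero_of_injective_algebraMap (IsFractionRing.injective D F)
  have : Algebra.IsAlgebraic ℤ F := (IsFractionRing.isAlgebraic_iff' ℤ D F).1 inferInstance
  have : Algebra.IsAlgebraic ℚ F := (IsFractionRing.comap_isAlgebraic_iff (A := ℤ)).1 this
  obtain ⟨σ, hσ⟩ := exists_ringHom_complex_one_le_norm_of_field
    ((Algebra.IsIntegral.isIntegral (R := ℤ) (f x)).algebraMap (B := F))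
    ((map_ne_zero_iff _ (IsFractionRing.injective D F)).2 hx)
  exact ⟨σ.comp ((algebraMap D F).comp f), hσ⟩

theorem charZero_quotient_of_mem_minimalPrimes {B : Type*} [CommRing B] [Module.IsTorsionFree ℤ B]
    {P : Ideal B} (hP : P ∈ minimalPrimes B) : CharZero (B ⧸ P) := by
  refine charZero_of_inj_zero fun n hn ↦ by_contra fun hn0 ↦ ?_
  have hmem : (n : B) ∈ P := by rwa [← Ideal.Quotient.eq_zero_iff_mem, map_natCast]
  refine Set.disjoint_left.1 (Ideal.disjoint_nonZeroDivisors_of_mem_minimalPrimes hP) hmem ?_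
  refine mem_nonZeroDivisors_iff_right.2 fun y hy ↦ ?_
  have : (n : ℤ) • y = 0 := by simpa [mul_comm] using hy
  exact (smul_eq_zero.1 this).resolve_left (mod_cast hn0)

variable {B : Type*} [CommRing B] [IsReduced B] [Module.IsTorsionFree ℤ B] [Algebra.IsIntegral ℤ B]

theorem exists_ringHom_complex_one_le_norm {x : B} (hx : x ≠ 0) :
    ∃ σ : B →+* ℂ, 1 ≤ ‖σ x‖ := by
  obtain ⟨P, hP, hxP⟩ : ∃ P ∈ minimalPrimes B, x ∉ P := by
    by_contra! h
    have : x ∈ nilradical B := by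
      rw [nilradical, ← Ideal.sInf_minimalPrimes]
      exact (Ideal.mem_sInf).2 fun {P} hP ↦ h P hP
    exact hx (IsNilpotent.eq_zero this)
  have : P.IsPrime := hP.1.1
  have := charZero_quotient_of_mem_minimalPrimes hP
  exact exists_ringHom_complex_one_le_norm_of_surjective (f := Ideal.Quotient.mk P)
    Ideal.Quotient.mk_surjective (mt Ideal.Quotient.eq_zero_iff_mem.1 hxP)

theorem eq_zero_of_forall_ringHom_complex {x : B} (h : ∀ σ : B →+* ℂ, σ x = 0) : x = 0 := by
  by_contra hx
  obtain ⟨σ, hσ⟩ := exists_ringHom_complex_one_le_norm hx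
  norm_num [h σ] at hσ

theorem isIdempotentElem_of_forall_ringHom_complex {x : B}
    (h : ∀ σ : B →+* ℂ, ∃ t ∈ Set.Icc (0 : ℝ) 1, σ x = t) : IsIdempotentElem x := by
  by_contra hx
  obtain ⟨σ, hσ⟩ := exists_ringHom_complex_one_le_norm (sub_ne_zero.2 hx)
  obtain ⟨t, ⟨h0, h1⟩, ht⟩ := h σ
  have hnorm : ‖σ (x * x - x)‖ = |t * t - t| := by
    rw [map_sub, map_mul, ht]
    exact mod_cast Complex.norm_real _
  have : |t * t - t| < 1 := abs_lt.2 ⟨by nlinarith, by nlinarith⟩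
  linarith

end ComplexEmbeddings

theorem eq_zero_of_forall_sum_mul_monoidHom_eq_zero {H : Type*} [CommGroup H] [Fintype H]
    {f : H → ℂ} (hf : ∀ χ : H →* ℂ, ∑ h, f h * χ h = 0) : f = 0 := by
  classical
  let L : (Additive H → ℂ) →ₗ[ℂ] ℂ := Fintype.linearCombination ℂ (f ∘ Additive.toMul)
  have hL : L = 0 := (AddChar.complexBasis (Additive H)).ext fun ψ ↦ by
    rw [AddChar.complexBasis_apply, LinearMap.zero_apply, ← hf ψ.toMonoidHom]
    exact Fintype.sum_equiv Additive.toMul _ _ fun _ ↦ mul_comm _ _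
  ext h
  simpa [L] using LinearMap.congr_fun hL (Pi.single (.ofMul h) 1)

section Evaluation

variable {B H R : Type*} [CommRing B] [CommGroup H] [CommRing R]

/-- The ring homomorphism `B[H] →+* R` given by `σ` on the base ring and by `χ` on the group, for
instance the evaluation at a complex character `χ` along a complex embedding `σ`. -/
noncomputable def evalHom (σ : B →+* R) (χ : H →* R) : B[H] →+* R :=
  liftNCRingHom σ χ fun _ _ ↦ Commute.all _ _

theorem evalHom_single (σ : B →+* R) (χ : H →* R) (h : H) (b : B) :
    evalHom σ χ (single h b) = σ b * χ h :=
  liftNCRingHom_single ..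

theorem evalHom_apply [Fintype H] (σ : B →+* R) (χ : H →* R) (x : B[H]) :
    evalHom σ χ x = ∑ h, σ (x.coeff h) * χ h := by
  conv_lhs => rw [← sum_coeff_single x, Finsupp.sum_fintype _ _ (by simp), map_sum]
  exact Finset.sum_congr rfl fun h _ ↦ evalHom_single ..

theorem coeff_eq_zero_of_forall_evalHom [Finite H] {x : B[H]} {σ : B →+* ℂ}
    (hx : ∀ χ : H →* ℂ, evalHom σ χ x = 0) (h : H) : σ (x.coeff h) = 0 := by
  have := Fintype.ofFinite H
  refine congrFun (eq_zero_of_forall_sum_mul_monoidHom_eq_zero (f := fun h ↦ σ (x.coeff h))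
    fun χ ↦ ?_) h
  rw [← evalHom_apply, hx]

theorem isReduced_monoidAlgebra [IsReduced B] [Module.IsTorsionFree ℤ B] [Algebra.IsIntegral ℤ B]
    [Finite H] : IsReduced B[H] where
  eq_zero x hx := by
    ext h
    exact eq_zero_of_forall_ringHom_complex fun σ ↦
      coeff_eq_zero_of_forall_evalHom (fun χ ↦ (hx.map (evalHom σ χ)).eq_zero) h

end Evaluation

section Adjoint

theorem eq_conj_of_isOfFinOrder {z w : ℂ} (hz : IsOfFinOrder z) (h : z * w = 1) : w = conj z := by
  rw [← Complex.inv_eq_conj hz.norm_eq_one, eq_inv_of_mul_eq_one_right h]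

/-- `v` is an adjoint of `u` if every ring homomorphism to `ℂ` sends the two to complex conjugate
numbers, as would be the case for an involution on `R` inducing complex conjugation. -/
def IsAdjoint {R : Type*} [CommRing R] (u v : R) : Prop :=
  ∀ τ : R →+* ℂ, τ v = conj (τ u)

section

variable {R : Type*} [CommRing R]

theorem isAdjoint_of_isOfFinOrder {u v : R} (hu : IsOfFinOrder u) (huv : u * v = 1) :
    IsAdjoint u v := fun τ ↦
  eq_conj_of_isOfFinOrder ((τ : R →* ℂ).isOfFinOrder hu) (by simp [← map_mul, huv])

theorem isAdjoint_self_of_isIdempotentElem {e : R} (he : IsIdempotentElem e) : IsAdjoint e e :=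
  fun τ ↦ by
  obtain h | h := IsIdempotentElem.iff_eq_zero_or_one.1 (he.map τ) <;> simp [h]

end

variable {B H : Type*} [CommRing B] [CommGroup H]

theorem coeff_mul_one_eq_sum [Fintype H] (u v : B[H]) :
    (u * v).coeff 1 = ∑ h, u.coeff h * v.coeff h⁻¹ := by
  rw [coeff_mul_apply_left, Finsupp.sum_fintype _ _ (by simp)]
  simp

variable {u v : B[H]}

theorem conj_evalHom [Fintype H] (σ : B →+* ℂ) (χ : H →* ℂ) (x : B[H]) :
    conj (evalHom σ χ x) = ∑ h, conj (σ (x.coeff h⁻¹)) * χ h := by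
  rw [evalHom_apply, map_sum, ← Equiv.sum_comp (Equiv.inv H)]
  refine Finset.sum_congr rfl fun h _ ↦ ?_
  rw [map_mul, Equiv.inv_apply, ← eq_conj_of_isOfFinOrder (w := χ h)
    (χ.isOfFinOrder (isOfFinOrder_of_finite h⁻¹)) (by rw [← map_mul, inv_mul_cancel, map_one])]

theorem IsAdjoint.map_coeff_inv [Finite H] (huv : IsAdjoint u v) (σ : B →+* ℂ) (h : H) :
    σ (v.coeff h⁻¹) = conj (σ (u.coeff h)) := by
  have := Fintype.ofFinite H
  have hsum : (fun k ↦ σ (v.coeff k) - conj (σ (u.coeff k⁻¹))) = 0 :=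
    eq_zero_of_forall_sum_mul_monoidHom_eq_zero fun χ ↦ by
      simp_rw [sub_mul, Finset.sum_sub_distrib, ← conj_evalHom, ← evalHom_apply,
        huv (evalHom σ χ), sub_self]
  simpa [sub_eq_zero] using congrFun hsum h⁻¹

theorem IsAdjoint.map_coeff_mul_coeff_inv [Finite H] (huv : IsAdjoint u v) (σ : B →+* ℂ) (h : H) :
    σ (u.coeff h * v.coeff h⁻¹) = (‖σ (u.coeff h)‖ ^ 2 : ℝ) := by
  rw [map_mul, huv.map_coeff_inv, Complex.mul_conj, Complex.normSq_eq_norm_sq]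

theorem IsAdjoint.sum_norm_sq [Fintype H] (huv : IsAdjoint u v) (σ : B →+* ℂ) :
    (∑ h, ‖σ (u.coeff h)‖ ^ 2 : ℝ) = σ ((u * v).coeff 1) := by
  rw [coeff_mul_one_eq_sum, map_sum, Complex.ofReal_sum]
  exact Finset.sum_congr rfl fun h _ ↦ (huv.map_coeff_mul_coeff_inv σ h).symm

theorem IsAdjoint.sum_norm_sq_eq_one [Fintype H] (huv : IsAdjoint u v) (h1 : u * v = 1)
    (σ : B →+* ℂ) : ∑ h, ‖σ (u.coeff h)‖ ^ 2 = 1 := by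
  simpa [h1, -Complex.ofReal_sum] using huv.sum_norm_sq σ

theorem norm_sq_add_norm_sq_le_sum {ι : Type*} [Fintype ι] (z : ι → ℂ) {i j : ι} (hij : i ≠ j) :
    ‖z i‖ ^ 2 + ‖z j‖ ^ 2 ≤ ∑ k, ‖z k‖ ^ 2 := by
  classical
  rw [← Finset.sum_pair (f := fun k ↦ ‖z k‖ ^ 2) hij]
  exact Finset.sum_le_univ_sum_of_nonneg fun _ ↦ by positivity

variable [IsReduced B] [Module.IsTorsionFree ℤ B] [Algebra.IsIntegral ℤ B] [Finite H]

theorem isIdempotentElem_coeff_mul_coeff_inv (huv : IsAdjoint u v) (h1 : u * v = 1) (h : H) :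
    IsIdempotentElem (u.coeff h * v.coeff h⁻¹) := by
  have := Fintype.ofFinite H
  refine isIdempotentElem_of_forall_ringHom_complex fun σ ↦
    ⟨_, ⟨by positivity, ?_⟩, huv.map_coeff_mul_coeff_inv σ h⟩
  rw [← huv.sum_norm_sq_eq_one h1 σ]
  exact Finset.single_le_sum (f := fun k ↦ ‖σ (u.coeff k)‖ ^ 2) (fun _ _ ↦ by positivity)
    (Finset.mem_univ h)

theorem coeff_mul_coeff_inv_mul_coeff_eq_zero (huv : IsAdjoint u v) (h1 : u * v = 1) {h k : H}
    (hk : h ≠ k) : u.coeff h * v.coeff h⁻¹ * u.coeff k = 0 := by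
  have := Fintype.ofFinite H
  refine eq_zero_of_forall_ringHom_complex fun σ ↦ ?_
  have hidem := (isIdempotentElem_coeff_mul_coeff_inv huv h1 h).map σ
  rw [map_mul, mul_eq_zero, or_iff_not_imp_left]
  intro hne
  have hh : ‖σ (u.coeff h)‖ ^ 2 = 1 := by
    have := (IsIdempotentElem.iff_eq_zero_or_one.1 hidem).resolve_left hne
    exact_mod_cast (huv.map_coeff_mul_coeff_inv σ h).symm.trans this
  have hle := norm_sq_add_norm_sq_le_sum (fun k ↦ σ (u.coeff k)) hk
  rw [huv.sum_norm_sq_eq_one h1, hh] at hle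
  have : ‖σ (u.coeff k)‖ ^ 2 = 0 := le_antisymm (by linarith) (by positivity)
  simpa using this

theorem completeOrthogonalIdempotents_coeff_mul_coeff_inv [Fintype H] (huv : IsAdjoint u v)
    (h1 : u * v = 1) :
    CompleteOrthogonalIdempotents fun h ↦ u.coeff h * v.coeff h⁻¹ where
  idem := isIdempotentElem_coeff_mul_coeff_inv huv h1
  ortho h k hk := by
    simp only [← mul_assoc, coeff_mul_coeff_inv_mul_coeff_eq_zero huv h1 hk, zero_mul]
  complete := by rw [← coeff_mul_one_eq_sum, h1, coeff_one_one]

theorem coeff_eq_zero_of_isIdempotentElem {e : B[H]} (he : IsIdempotentElem e) {h : H}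
    (hh : h ≠ 1) : e.coeff h = 0 := by
  have := Fintype.ofFinite H
  have hadj := isAdjoint_self_of_isIdempotentElem he
  have hsum (σ : B →+* ℂ) : (∑ k, ‖σ (e.coeff k)‖ ^ 2 : ℝ) = σ (e.coeff 1) := by
    rw [hadj.sum_norm_sq, he.eq]
  have hle (σ : B →+* ℂ) {t : ℝ} (ht : σ (e.coeff 1) = t) : t ^ 2 + ‖σ (e.coeff h)‖ ^ 2 ≤ t := by
    have := norm_sq_add_norm_sq_le_sum (fun k ↦ σ (e.coeff k)) hh.symm
    rw [Complex.ofReal_inj.1 ((hsum σ).trans ht), ht] at this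
    simpa using this
  have hidem : IsIdempotentElem (e.coeff 1) :=
    isIdempotentElem_of_forall_ringHom_complex fun σ ↦
      ⟨_, ⟨by positivity, by nlinarith [hle σ (hsum σ).symm]⟩, (hsum σ).symm⟩
  refine eq_zero_of_forall_ringHom_complex fun σ ↦ ?_
  have : ‖σ (e.coeff h)‖ ^ 2 = 0 := by
    refine le_antisymm ?_ (by positivity)
    obtain h0 | h0 := IsIdempotentElem.iff_eq_zero_or_one.1 (hidem.map σ)
    · simpa using hle σ (t := 0) (by simpa using h0)
    · simpa using hle σ (t := 1) (by simpa using h0)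
  simpa using this

theorem exists_eq_single_one_of_isIdempotentElem {e : B[H]} (he : IsIdempotentElem e) :
    ∃ f, e = single 1 f := by
  classical
  refine ⟨e.coeff 1, ?_⟩
  ext h
  obtain rfl | hh := eq_or_ne h 1
  · simp
  · rw [coeff_eq_zero_of_isIdempotentElem he hh, coeff_single, Finsupp.single_eq_of_ne hh]

end Adjoint

section Idempotents

variable {R : Type*} [CommRing R]

theorem completeOrthogonalIdempotents_mul {ι κ : Type*} [Fintype ι] [Fintype κ] {e : ι → R}
    {f : κ → R} (he : CompleteOrthogonalIdempotents e) (hf : CompleteOrthogonalIdempotents f) :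
    CompleteOrthogonalIdempotents fun p : ι × κ ↦ e p.1 * f p.2 where
  idem p := (he.idem p.1).mul (hf.idem p.2)
  ortho p q hpq := by
    simp only [mul_mul_mul_comm (e p.1)]
    obtain h | h : p.1 ≠ q.1 ∨ p.2 ≠ q.2 := by rwa [← not_and_or, ← Prod.ext_iff]
    · rw [he.ortho h, zero_mul]
    · rw [hf.ortho h, mul_zero]
  complete := by
    rw [Fintype.sum_prod_type, ← Finset.sum_mul_sum, he.complete, hf.complete, one_mul]

theorem completeOrthogonalIdempotents_prod {κ ι : Type*} [Fintype κ] [DecidableEq κ] [Fintype ι]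
    {e : κ → ι → R} (he : ∀ k, CompleteOrthogonalIdempotents (e k)) :
    CompleteOrthogonalIdempotents fun f : κ → ι ↦ ∏ k, e k (f k) where
  idem f := by
    simp only [IsIdempotentElem, ← Finset.prod_mul_distrib, ((he _).idem _).eq]
  ortho f f' hf := by
    obtain ⟨k, hk⟩ := Function.ne_iff.1 hf
    simp only [← Finset.prod_mul_distrib]
    exact Finset.prod_eq_zero (Finset.mem_univ k) ((he k).ortho hk)
  complete := by
    rw [← Fintype.prod_sum]
    simp only [(he _).complete, Finset.prod_const_one]

theorem exists_ringEquiv_of_surjective {R S R' S' : Type*} [CommRing R] [CommRing S] [CommRing R']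
    [CommRing S'] (φ : R ≃+* S) {p : R →+* R'} {q : S →+* S'} (hp : Function.Surjective p)
    (hq : Function.Surjective q) (h : ∀ x, p x = 0 ↔ q (φ x) = 0) :
    ∃ ψ : R' ≃+* S', ∀ x, ψ (p x) = q (φ x) := by
  have hq' : Function.Surjective (q.comp (φ : R →+* S)) := hq.comp φ.surjective
  have hker : RingHom.ker p = RingHom.ker (q.comp (φ : R →+* S)) := Ideal.ext h
  refine ⟨(RingHom.quotientKerEquivOfSurjective hp).symm.trans
    ((Ideal.quotEquivOfEq hker).trans (RingHom.quotientKerEquivOfSurjective hq')), fun x ↦ ?_⟩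
  have : (RingHom.quotientKerEquivOfSurjective hp).symm (p x) = Ideal.Quotient.mk _ x :=
    (RingEquiv.symm_apply_eq _).2 rfl
  rw [RingEquiv.trans_apply, this]
  rfl

theorem mk_span_one_sub_eq_zero_iff {e : R} (he : IsIdempotentElem e) {a : R} :
    Ideal.Quotient.mk (Ideal.span {1 - e}) a = 0 ↔ e * a = 0 := by
  rw [Ideal.Quotient.eq_zero_iff_mem, Ideal.mem_span_singleton]
  constructor
  · rintro ⟨c, rfl⟩
    rw [← mul_assoc, he.mul_one_sub_self, zero_mul]
  · intro h
    exact ⟨a, by rw [sub_mul, h, one_mul, sub_zero]⟩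

end Idempotents

section Monomial

theorem completeOrthogonalIdempotents_single_one_iff {R M ι : Type*} [CommRing R] [CommMonoid M]
    [Fintype ι] {e : ι → R} :
    CompleteOrthogonalIdempotents (fun i ↦ (single 1 (e i) : R[M])) ↔
      CompleteOrthogonalIdempotents e :=
  CompleteOrthogonalIdempotents.map_injective_iff (singleOneRingHom : R →+* R[M])
    single_right_injective

variable {A B G H : Type*} [CommRing A] [CommRing B] [CommGroup G] [CommGroup H]

theorem map_mk_span_one_sub_eq_zero_iff {e : A} (he : IsIdempotentElem e) {x : A[G]} :
    mapRingHom G (Ideal.Quotient.mk (Ideal.span {1 - e})) x = 0 ↔ single 1 e * x = 0 := by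
  simp only [MonoidAlgebra.ext_iff, coeff_mapRingHom, mk_span_one_sub_eq_zero_iff he, coeff_zero,
    Finsupp.zero_apply, coeff_single_one_mul, Finsupp.ext_iff]

theorem exists_completeOrthogonalIdempotents_single_mul [IsReduced B] [Module.IsTorsionFree ℤ B]
    [Algebra.IsIntegral ℤ B] [Fintype G] [DecidableEq G] [Fintype H] (φ : A[G] →+* B[H]) :
    ∃ f : (G → H) → B, CompleteOrthogonalIdempotents f ∧
      ∀ d g, ∃ b, single 1 (f d) * φ (single g 1) = single (d g) b := by
  let u : G →* B[H] := (φ : A[G] →* B[H]).comp (of A G)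
  have hmul (g : G) : u g * u g⁻¹ = 1 := by rw [← map_mul, mul_inv_cancel, map_one]
  have hadj (g : G) : IsAdjoint (u g) (u g⁻¹) :=
    isAdjoint_of_isOfFinOrder (u.isOfFinOrder (isOfFinOrder_of_finite g)) (hmul g)
  let E (g : G) (h : H) : B := (u g).coeff h * (u g⁻¹).coeff h⁻¹
  have hE (g : G) (h : H) : single 1 (E g h) * u g = single h (E g h * (u g).coeff h) := by
    classical
    ext k
    rw [coeff_single_one_mul, coeff_single]
    obtain rfl | hk := eq_or_ne k h
    · rw [Finsupp.single_eq_same]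
    · rw [coeff_mul_coeff_inv_mul_coeff_eq_zero (hadj g) (hmul g) hk.symm,
        Finsupp.single_eq_of_ne hk]
  refine ⟨fun d ↦ ∏ g, E g (d g), completeOrthogonalIdempotents_prod fun g ↦
    completeOrthogonalIdempotents_coeff_mul_coeff_inv (hadj g) (hmul g), fun d g ↦
    ⟨(∏ k ∈ Finset.univ.erase g, E k (d k)) * (E g (d g) * (u g).coeff (d g)), ?_⟩⟩
  change single 1 (∏ k, E k (d k)) * u g = _
  rw [← Finset.prod_erase_mul _ _ (Finset.mem_univ g), ← one_mul (1 : H), ← single_mul_single,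
    mul_assoc, hE, single_mul_single, one_mul]

theorem single_one_mul_mul (a a' : A) (x : A[G]) :
    single 1 (a * a') * x = single 1 a * (single 1 a' * x) := by
  rw [← mul_assoc, single_mul_single, one_mul]

theorem exists_completeOrthogonalIdempotents_equiv [IsReduced A] [Module.IsTorsionFree ℤ A]
    [Algebra.IsIntegral ℤ A] [IsReduced B] [Module.IsTorsionFree ℤ B] [Algebra.IsIntegral ℤ B]
    [Fintype G] [DecidableEq G] [Fintype H] [DecidableEq H] (φ : A[G] ≃+* B[H]) :
    ∃ (e : (G → H) × (H → G) → A) (f : (G → H) × (H → G) → B),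
      CompleteOrthogonalIdempotents e ∧ CompleteOrthogonalIdempotents f ∧
      (∀ p, φ (single 1 (e p)) = single 1 (f p)) ∧
      (∀ p g, ∃ b, single 1 (f p) * φ (single g 1) = single (p.1 g) b) ∧
      ∀ p h, ∃ a, single 1 (e p) * φ.symm (single h 1) = single (p.2 h) a := by
  obtain ⟨f, hf, hfφ⟩ := exists_completeOrthogonalIdempotents_single_mul (φ : A[G] →+* B[H])
  obtain ⟨e, he, heφ⟩ :=
    exists_completeOrthogonalIdempotents_single_mul (φ.symm : B[H] →+* A[G])
  replace hf := (completeOrthogonalIdempotents_single_one_iff (M := H)).2 hf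
  replace he := (completeOrthogonalIdempotents_single_one_iff (M := G)).2 he
  choose a ha using fun d ↦ exists_eq_single_one_of_isIdempotentElem ((hf.idem d).map φ.symm)
  choose b hb using fun d ↦ exists_eq_single_one_of_isIdempotentElem ((he.idem d).map φ)
  have hφ (d d') : φ (single 1 (a d * e d')) = single 1 (f d * b d') := by
    rw [← one_mul (1 : G), ← single_mul_single, map_mul, hb, ← ha, φ.apply_symm_apply,
      single_mul_single, one_mul]
  have hA : CompleteOrthogonalIdempotents
      fun p : (G → H) × (H → G) ↦ (single 1 (a p.1 * e p.2) : A[G]) := by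
    have := completeOrthogonalIdempotents_mul (hf.map (φ.symm : B[H] →+* A[G])) he
    simpa [ha] using this
  have hB : CompleteOrthogonalIdempotents
      fun p : (G → H) × (H → G) ↦ (single 1 (f p.1 * b p.2) : B[H]) := by
    simpa [Function.comp_def, hφ] using hA.map (φ : A[G] →+* B[H])
  refine ⟨_, _, completeOrthogonalIdempotents_single_one_iff.1 hA,
    completeOrthogonalIdempotents_single_one_iff.1 hB, fun p ↦ hφ p.1 p.2,
    fun p g ↦ ?_, fun p h ↦ ?_⟩
  · obtain ⟨c, hc⟩ := hfφ p.1 g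
    exact ⟨b p.2 * c, by
      rw [mul_comm (f _), single_one_mul_mul, ← RingEquiv.coe_toRingHom φ, hc, single_mul_single,
        one_mul]⟩
  · obtain ⟨c, hc⟩ := heφ p.2 h
    exact ⟨a p.1 * c, by
      rw [single_one_mul_mul, ← RingEquiv.coe_toRingHom φ.symm, hc, single_mul_single, one_mul]⟩

/-- A ring homomorphism of group rings is monomial if it maps each group element to a multiple of a
group element. -/
def IsMonomial (φ : A[G] →+* B[H]) : Prop := ∀ g, ∃ h b, φ (single g 1) = single h b

theorem exists_ringEquiv_quotient_span_one_sub (φ : A[G] ≃+* B[H]) {e : A} {f : B}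
    (he : IsIdempotentElem e) (hf : IsIdempotentElem f) (hef : φ (single 1 e) = single 1 f) :
    ∃ ψ : (A ⧸ Ideal.span {1 - e})[G] ≃+* (B ⧸ Ideal.span {1 - f})[H],
      ∀ x, ψ (mapRingHom G (Ideal.Quotient.mk _) x) = mapRingHom H (Ideal.Quotient.mk _) (φ x) := by
  refine exists_ringEquiv_of_surjective φ
    (map_surjective (Ideal.Quotient.mk _).toAddMonoidHom Ideal.Quotient.mk_surjective)
    (map_surjective (Ideal.Quotient.mk _).toAddMonoidHom Ideal.Quotient.mk_surjective) fun x ↦ ?_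
  rw [map_mk_span_one_sub_eq_zero_iff he, map_mk_span_one_sub_eq_zero_iff hf, ← hef, ← map_mul,
    EmbeddingLike.map_eq_zero_iff]

theorem isMonomial_of_single_one_mul {φ : A[G] →+* B[H]} {e : A} {f : B} (hf : IsIdempotentElem f)
    {ψ : (A ⧸ Ideal.span {1 - e})[G] →+* (B ⧸ Ideal.span {1 - f})[H]}
    (hψ : ∀ x, ψ (mapRingHom G (Ideal.Quotient.mk _) x) = mapRingHom H (Ideal.Quotient.mk _) (φ x))
    (h : ∀ g, ∃ h b, single 1 f * φ (single g 1) = single h b) : IsMonomial ψ := fun g ↦ by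
  obtain ⟨k, b, hb⟩ := h g
  have hf1 : Ideal.Quotient.mk (Ideal.span {1 - f}) f = 1 := by
    rw [← sub_eq_zero, ← map_one (Ideal.Quotient.mk _), ← map_sub,
      mk_span_one_sub_eq_zero_iff hf, mul_sub, hf.eq, mul_one, sub_self]
  refine ⟨k, Ideal.Quotient.mk _ b, ?_⟩
  have := hψ (single g 1)
  rw [mapRingHom_single, map_one] at this
  rw [this, ← mapRingHom_single, ← hb, map_mul, mapRingHom_single, hf1, ← one_def, one_mul]

theorem exists_monomial_decomposition {A : Type u} {B : Type v} [CommRing A] [IsReduced A]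
    [Module.IsTorsionFree ℤ A] [Algebra.IsIntegral ℤ A] [CommRing B] [IsReduced B]
    [Module.IsTorsionFree ℤ B] [Algebra.IsIntegral ℤ B] [Finite G] [Finite H] (φ : A[G] ≃+* B[H]) :
    ∃ (n : ℕ) (A' : Fin n → Type u) (B' : Fin n → Type v) (_ : ∀ i, CommRing (A' i))
      (_ : ∀ i, CommRing (B' i)) (ψ : ∀ i, (A' i)[G] ≃+* (B' i)[H]),
      Nonempty (A ≃+* Π i, A' i) ∧ Nonempty (B ≃+* Π i, B' i) ∧
      ∀ i, IsMonomial (ψ i).toRingHom ∧ IsMonomial (ψ i).symm.toRingHom := by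
  classical
  have := Fintype.ofFinite G
  have := Fintype.ofFinite H
  obtain ⟨e, f, he, hf, hef, hφ, hφ'⟩ := exists_completeOrthogonalIdempotents_equiv φ
  let t := (Finite.equivFin ((G → H) × (H → G))).symm
  choose ψ hψ using fun p ↦
    exists_ringEquiv_quotient_span_one_sub φ (he.idem p) (hf.idem p) (hef p)
  have hmon (p) : IsMonomial (ψ p).toRingHom :=
    isMonomial_of_single_one_mul (φ := φ.toRingHom) (hf.idem p) (hψ p) fun g ↦ ⟨_, hφ p g⟩
  have hmon' (p) : IsMonomial (ψ p).symm.toRingHom :=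
    isMonomial_of_single_one_mul (φ := φ.symm.toRingHom) (he.idem p)
      (fun x ↦ (ψ p).symm_apply_eq.2 (by simp [hψ])) fun h ↦ ⟨_, hφ' p h⟩
  exact ⟨_, fun i ↦ A ⧸ Ideal.span {1 - e (t i)}, fun i ↦ B ⧸ Ideal.span {1 - f (t i)},
    inferInstance, inferInstance, fun i ↦ ψ (t i),
    ⟨.ofBijective _ ((CompleteOrthogonalIdempotents.equiv t).2 he).bijective_pi⟩,
    ⟨.ofBijective _ ((CompleteOrthogonalIdempotents.equiv t).2 hf).bijective_pi⟩,
    fun i ↦ ⟨hmon (t i), hmon' (t i)⟩⟩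

end Monomial

section DirectFactor

theorem exists_pos_isIdempotentElem_pow {M : Type*} [Monoid M] [Finite M] (f : M) :
    ∃ n, 0 < n ∧ IsIdempotentElem (f ^ n) := by
  obtain ⟨a, b, hab, h⟩ := Set.finite_univ.exists_lt_map_eq_of_forall_mem (f := (f ^ · : ℕ → M))
    fun _ ↦ Set.mem_univ _
  obtain ⟨p, rfl⟩ := Nat.exists_eq_add_of_lt hab
  have hper (k : ℕ) : f ^ (a + k * (p + 1)) = f ^ a := by
    induction k with
    | zero => simp
    | succ k ih => rw [add_one_mul, ← add_assoc, pow_add, ih, ← pow_add, ← add_assoc, ← h]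
  refine ⟨(a + 1) * (p + 1), by positivity, ?_⟩
  calc f ^ ((a + 1) * (p + 1)) * f ^ ((a + 1) * (p + 1))
      = f ^ (a + (a + 1) * (p + 1)) * f ^ (a * p + p + 1) := by
        rw [← pow_add, ← pow_add]
        congr 1
        ring
    _ = f ^ ((a + 1) * (p + 1)) := by
        rw [hper, ← pow_add]
        congr 1
        ring

variable {G H P Q : Type*} [CommGroup G] [CommGroup H] [CommGroup P] [CommGroup Q]

theorem exists_retraction_of_not_fixedPointFree [Finite G] {d : G →* H} {d' : H →* G}
    (h : ¬ MonoidHom.FixedPointFree (d'.comp d)) :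
    ∃ (P : Subgroup G) (r : G →* P) (s : H →* P), P ≠ ⊥ ∧ Function.LeftInverse r P.subtype ∧
      Function.LeftInverse s (d.comp P.subtype) := by
  obtain ⟨x, hfix, hx⟩ : ∃ x, d' (d x) = x ∧ x ≠ 1 := by
    simpa [MonoidHom.FixedPointFree] using h
  let f : Monoid.End G := d'.comp d
  have : Finite (Monoid.End G) := Finite.of_injective _ (DFunLike.coe_injective (F := G →* G))
  obtain ⟨n, hn, hidem⟩ := exists_pos_isIdempotentElem_pow f
  let e : G →* G := f ^ n
  have he (p : e.range) : e p = p := by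
    obtain ⟨_, y, rfl⟩ := p
    exact DFunLike.congr_fun hidem.eq y
  have hes (y : G) : (f ^ (n - 1) : Monoid.End G) (d' (d y)) = e y := by
    refine DFunLike.congr_fun (?_ : f ^ (n - 1) * f = f ^ n) y
    rw [← pow_succ, Nat.sub_add_cancel hn]
  have hex : e x = x := by
    have : e x = f^[n] x := congrFun (Monoid.End.coe_pow G f n) x
    rw [this]
    exact Function.iterate_fixed hfix n
  refine ⟨e.range, e.rangeRestrict, e.rangeRestrict.comp ((f ^ (n - 1) : Monoid.End G).comp d'),
    ?_, fun p ↦ Subtype.ext (he p), fun p ↦ Subtype.ext ?_⟩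
  · exact Subgroup.ne_bot_iff_exists_ne_one.2 ⟨⟨x, x, hex⟩, fun h ↦ hx congr(($h : G))⟩
  · exact (congrArg e (hes p)).trans (by rw [he, he])

/-- `P` is isomorphic to a direct factor of `G`. For commutative groups this amounts to a retraction
of a homomorphism `P →* G`, the complement being the kernel of the retraction. -/
def IsDirectFactor (P G : Type*) [CommGroup P] [CommGroup G] : Prop :=
  ∃ (i : P →* G) (r : G →* P), Function.LeftInverse r i

theorem IsDirectFactor.trans (hQ : IsDirectFactor Q P) (hP : IsDirectFactor P G) :
    IsDirectFactor Q G := by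
  obtain ⟨i, r, hr⟩ := hQ
  obtain ⟨j, s, hs⟩ := hP
  exact ⟨j.comp i, r.comp s, fun q ↦ by simp [hs (i q), hr q]⟩

theorem isDirectFactor_of_mulEquiv (e : P ≃* Q) : IsDirectFactor P Q :=
  ⟨e, e.symm, e.symm_apply_apply⟩

theorem IsDirectFactor.exists_mulEquiv_prod (h : IsDirectFactor P G) :
    ∃ K : Subgroup G, Nonempty (G ≃* P × K) := by
  obtain ⟨i, r, hr⟩ := h
  let f : P × r.ker →* G := i.coprod r.ker.subtype
  have hf (q : P × r.ker) : r (f q) = q.1 := by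
    simp [f, hr q.1, r.mem_ker.1 q.2.2]
  refine ⟨r.ker, ⟨(MulEquiv.ofBijective f ⟨?_, fun g ↦ ?_⟩).symm⟩⟩
  · refine (injective_iff_map_eq_one f).2 fun q hq ↦ ?_
    have h1 : q.1 = 1 := by rw [← hf q, hq, map_one]
    refine Prod.ext h1 (Subtype.ext ?_)
    simpa [f, h1] using hq
  · exact ⟨(r g, ⟨(i (r g))⁻¹ * g, by simp [r.mem_ker, hr (r g)]⟩), by simp [f]⟩

/-- For finite `P` this is the usual notion of an indecomposable group, except that the trivial
group is allowed. Asking `Q` to be only isomorphic to a direct factor makes no difference then. -/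
def IsIndecomposable (P : Type*) [CommGroup P] : Prop :=
  ∀ Q : Subgroup P, IsDirectFactor Q P → Q = ⊥ ∨ Q = ⊤

theorem IsIndecomposable.bijective_of_not_fixedPointFree [Finite P] (hP : IsIndecomposable P)
    {d d' : P →* P} (h : ¬ MonoidHom.FixedPointFree (d'.comp d)) : Function.Bijective d := by
  obtain ⟨Q, r, s, hQ, hr, hs⟩ := exists_retraction_of_not_fixedPointFree h
  obtain rfl := (hP Q ⟨_, r, hr⟩).resolve_left hQ
  exact Finite.injective_iff_bijective.1 fun x y hxy ↦
    congrArg Subtype.val (hs.injective (a₁ := ⟨x, trivial⟩) (a₂ := ⟨y, trivial⟩) hxy)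

theorem exists_isIndecomposable_of_not_fixedPointFree [Finite G] {d : G →* H} {d' : H →* G}
    (h : ¬ MonoidHom.FixedPointFree (d'.comp d)) :
    ∃ P : Subgroup G, P ≠ ⊥ ∧ IsIndecomposable P ∧ IsDirectFactor P G ∧ IsDirectFactor P H := by
  obtain ⟨P₀, r, s, hP₀, hr, hs⟩ := exists_retraction_of_not_fixedPointFree h
  obtain ⟨P, ⟨hP, hPG, hPH⟩, hmin⟩ := (Set.toFinite {P : Subgroup G | P ≠ ⊥ ∧ IsDirectFactor P G ∧
    IsDirectFactor P H}).exists_minimal ⟨P₀, hP₀, ⟨_, r, hr⟩, ⟨_, s, hs⟩⟩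
  refine ⟨P, hP, fun Q hQ ↦ or_iff_not_imp_left.2 fun hQ' ↦ ?_, hPG, hPH⟩
  have hmap : IsDirectFactor (Q.map P.subtype) P :=
    (isDirectFactor_of_mulEquiv (Q.equivMapOfInjective _ P.subtype_injective).symm).trans hQ
  have hQ₀ : Q.map P.subtype ≠ ⊥ :=
    (Subgroup.map_eq_bot_iff_of_injective Q P.subtype_injective).not.2 hQ'
  have hle : P ≤ Q.map P.subtype :=
    hmin ⟨hQ₀, hmap.trans hPG, hmap.trans hPH⟩ (Subgroup.map_subtype_le Q)
  refine (Subgroup.map_injective P.subtype_injective).eq_iff.1 ?_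
  rw [← MonoidHom.range_eq_map, Subgroup.range_subtype]
  exact (Subgroup.map_subtype_le Q).antisymm hle

end DirectFactor

section MonomialEquiv

variable {A B G H : Type*} [CommRing A] [CommRing B] [CommGroup G] [CommGroup H]

theorem IsMonomial.exists_monoidHom {φ : A[G] →+* B[H]} (hφ : IsMonomial φ) :
    ∃ (d : G →* H) (b : G →* Bˣ), ∀ g, φ (single g 1) = single (d g) (b g : B) := by
  cases subsingleton_or_nontrivial B
  · exact ⟨1, 1, fun g ↦ MonoidAlgebra.ext (Subsingleton.elim _ _)⟩
  choose d b hdb using hφ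
  have hb (g : G) : IsUnit (b g) := by
    have h1 : single (d g * d g⁻¹) (b g * b g⁻¹) = (single 1 1 : B[H]) := by
      rw [← single_mul_single, ← hdb, ← hdb, ← map_mul, single_mul_single, mul_inv_cancel, mul_one,
        ← one_def, map_one, one_def]
    refine IsUnit.of_mul_eq_one (b g⁻¹) ?_
    obtain h | h := single_inj.1 h1
    · exact h.2
    · exact absurd h.2 one_ne_zero
  have hmul (g g' : G) : d (g * g') = d g * d g' ∧ b (g * g') = b g * b g' := by
    have h2 : single (d (g * g')) (b (g * g')) = single (d g * d g') (b g * b g') := by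
      rw [← single_mul_single, ← hdb, ← hdb, ← hdb, ← map_mul, single_mul_single, mul_one]
    exact (single_inj.1 h2).resolve_right fun h ↦ (hb _).ne_zero h.1
  choose b' hb' using hb
  exact ⟨.mk' d fun g g' ↦ (hmul g g').1,
    .mk' b' fun g g' ↦ Units.ext (by simp only [Units.val_mul, hb', (hmul g g').2]),
    fun g ↦ by simp [hdb, hb']⟩

/-- The augmentation `A[G] →+* A` sends every group element to `1`. -/
noncomputable def augmentation (A G : Type*) [CommRing A] [CommGroup G] : A[G] →+* A :=
  evalHom (RingHom.id A) 1

theorem augmentation_single (g : G) (a : A) : augmentation A G (single g a) = a := by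
  simp [augmentation, evalHom_single]

theorem augmentation_surjective : Function.Surjective (augmentation A G) :=
  fun a ↦ ⟨single 1 a, augmentation_single 1 a⟩

theorem map_single_one_augmentation {f : A[G] →+* B} (hf : ∀ g, f (single g 1) = 1) (x : A[G]) :
    f (single 1 (augmentation A G x)) = f x := by
  suffices (f.comp singleOneRingHom).comp (augmentation A G) = f from congr($this x)
  refine ringHom_ext (fun r ↦ ?_) fun g ↦ ?_ <;> simp [augmentation_single, hf]

/-- The ring isomorphism `B[G] ≃+* B[H]` over `B` sending `g` to `β g` times `δ g`. -/
noncomputable def twistEquiv (δ : G ≃* H) (β : G →* Bˣ) : B[G] ≃+* B[H] :=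
  let twist (β : G →* Bˣ) : B[G] →+* B[G] :=
    evalHom singleOneRingHom (singleHom.comp (((Units.coeHom B).comp β).prod (MonoidHom.id G)))
  (RingEquiv.ofRingHom (twist β) (twist β⁻¹)
    (ringHom_ext (by simp [twist, evalHom_single]) (by simp [twist, evalHom_single]))
    (ringHom_ext (by simp [twist, evalHom_single]) (by simp [twist, evalHom_single]))).trans
  (mapDomainRingEquiv B δ)

theorem twistEquiv_single (δ : G ≃* H) (β : G →* Bˣ) (g : G) (b : B) :
    twistEquiv δ β (single g b) = single (δ g) (b * β g) := by
  simp [twistEquiv, evalHom_single]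

theorem nonempty_ringEquiv_of_single_one {φ : A[G] ≃+* B[G]}
    (hφ : ∀ g, φ (single g 1) = single g 1) : Nonempty (A ≃+* B) := by
  have hφ' (g : G) : φ.symm (single g 1) = single g 1 := φ.symm_apply_eq.2 (hφ g).symm
  have hker (x : A[G]) : augmentation A G x = 0 ↔ augmentation B G (φ x) = 0 := by
    refine ⟨fun hx ↦ ?_, fun hx ↦ ?_⟩
    · simpa [hx] using (map_single_one_augmentation (f := (augmentation B G).comp φ.toRingHom)
        (by simp [hφ, augmentation_single]) x).symm
    · simpa [hx] using (map_single_one_augmentation (f := (augmentation A G).comp φ.symm.toRingHom)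
        (by simp [hφ', augmentation_single]) (φ x)).symm
  obtain ⟨ψ, -⟩ :=
    exists_ringEquiv_of_surjective φ augmentation_surjective augmentation_surjective hker
  exact ⟨ψ⟩

theorem nonempty_ringEquiv_of_single_one_eq_single {φ : A[G] ≃+* B[H]} (d : G ≃* H) (b : G →* Bˣ)
    (hφ : ∀ g, φ (single g 1) = single (d g) (b g : B)) : Nonempty (A ≃+* B) :=
  nonempty_ringEquiv_of_single_one (φ := φ.trans (twistEquiv d b).symm) fun g ↦ by
    rw [RingEquiv.trans_apply, RingEquiv.symm_apply_eq, hφ, twistEquiv_single, one_mul]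

theorem symm_single_one_of_forall_single {φ : A[G] ≃+* B[H]} {d : G →* H} {b : G →* Bˣ}
    {d' : H →* G} {a : H →* Aˣ} (hφ : ∀ g, φ (single g 1) = single (d g) (b g : B))
    (hφ' : ∀ h, φ.symm (single h 1) = single (d' h) (a h : A)) (g : G) :
    φ.symm (single 1 (b g : B)) = single (g / d' (d g)) ((a (d g))⁻¹ : Aˣ).val := by
  have : single 1 (b g : B) = φ (single g 1) * single (d g)⁻¹ 1 := by
    rw [hφ, single_mul_single, mul_inv_cancel, mul_one]
  rw [this, map_mul, φ.symm_apply_apply, hφ', single_mul_single, one_mul, map_inv, map_inv,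
    div_eq_mul_inv]

theorem exists_mulEquiv_div_of_fixedPointFree [Finite G] {f : G →* G}
    (hf : MonoidHom.FixedPointFree f) : ∃ δ : G ≃* G, ∀ g, δ g = g / f g :=
  ⟨.ofBijective (MonoidHom.id G / f)
    ⟨hf.commutatorMap_injective, hf.commutatorMap_surjective⟩, fun _ ↦ rfl⟩

theorem exists_ringEquiv_single_one_swap [Finite G] [Finite H] {φ : A[G] ≃+* B[H]}
    {d : G →* H} {b : G →* Bˣ} {d' : H →* G} {a : H →* Aˣ}
    (hφ : ∀ g, φ (single g 1) = single (d g) (b g : B))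
    (hφ' : ∀ h, φ.symm (single h 1) = single (d' h) (a h : A))
    (hd : MonoidHom.FixedPointFree (d'.comp d)) (hd' : MonoidHom.FixedPointFree (d.comp d')) :
    ∃ ψ : A[G] ≃+* B[H], (∀ g, ψ (single g 1) = single 1 (b g : B)) ∧
      ∀ h, ψ (single 1 (a h : A)) = single h 1 := by
  obtain ⟨δ, hδ⟩ := exists_mulEquiv_div_of_fixedPointFree hd
  obtain ⟨δ', hδ'⟩ := exists_mulEquiv_div_of_fixedPointFree hd'
  refine ⟨((twistEquiv δ (a.comp d)⁻¹).trans φ).trans (twistEquiv δ' (b.comp d')⁻¹).symm,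
    fun g ↦ ?_, fun h ↦ ?_⟩
  · have := symm_single_one_of_forall_single hφ hφ' g
    simp [RingEquiv.symm_apply_eq, twistEquiv_single, hδ, ← this]
  · have := symm_single_one_of_forall_single (φ := φ.symm) hφ' hφ h
    rw [RingEquiv.symm_symm] at this
    simp [RingEquiv.symm_apply_eq, twistEquiv_single, hδ', this]

section Swap

variable {ψ : A[G] ≃+* B[H]} {b : G →* Bˣ}

theorem augmentation_symm_eq_zero {I : Ideal B}
    (hI : I = Ideal.span (Set.range fun g ↦ (b g : B) - 1))
    (hψ : ∀ g, ψ (single g 1) = single 1 (b g : B)) {y : B[H]}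
    (hy : mapRingHom H (Ideal.Quotient.mk I) y = 0) :
    augmentation A G (ψ.symm y) = 0 := by
  let f : B[H] →+* A := (augmentation A G).comp ψ.symm.toRingHom
  have hle : I ≤ RingHom.ker (f.comp singleOneRingHom) := by
    rw [hI, Ideal.span_le, Set.range_subset_iff]
    intro g
    have : ψ.symm (single 1 (b g : B)) = single g 1 := ψ.symm_apply_eq.2 (hψ g).symm
    simp [f, RingHom.mem_ker, this, augmentation_single, ← one_def]
  change f y = 0
  rw [← sum_coeff_single y, map_finsuppSum]
  refine Finset.sum_eq_zero fun h _ ↦ ?_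
  have hmem : y.coeff h ∈ I := by
    rw [← Ideal.Quotient.eq_zero_iff_mem, ← coeff_mapRingHom, hy, coeff_zero, Finsupp.zero_apply]
  have : single h (y.coeff h) = single 1 (y.coeff h) * single h 1 := by
    rw [single_mul_single, one_mul, mul_one]
  simp only [this, map_mul]
  exact mul_eq_zero_of_left (hle hmem) _

theorem exists_ringEquiv_quotient_monoidAlgebra {I : Ideal B}
    (hI : I = Ideal.span (Set.range fun g ↦ (b g : B) - 1))
    (hψ : ∀ g, ψ (single g 1) = single 1 (b g : B)) :
    ∃ α : A ≃+* (B ⧸ I)[H], ∀ x, α x = mapRingHom H (Ideal.Quotient.mk I) (ψ (single 1 x)) := by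
  have hb (g : G) : Ideal.Quotient.mk I (b g) = 1 := by
    rw [← sub_eq_zero, ← map_one (Ideal.Quotient.mk I), ← map_sub, Ideal.Quotient.eq_zero_iff_mem,
      hI]
    exact Ideal.subset_span ⟨g, rfl⟩
  let q : A[G] →+* (B ⧸ I)[H] := (mapRingHom H (Ideal.Quotient.mk I)).comp ψ.toRingHom
  have hq (x : A[G]) : q (single 1 (augmentation A G x)) = q x :=
    map_single_one_augmentation (by simp [q, hψ, hb, ← one_def]) x
  obtain ⟨α, hα⟩ := exists_ringEquiv_of_surjective ψ (q := mapRingHom H (Ideal.Quotient.mk I))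
    augmentation_surjective
    (map_surjective (Ideal.Quotient.mk I).toAddMonoidHom Ideal.Quotient.mk_surjective)
    fun x ↦ ⟨fun hx ↦ (hq x).symm.trans (by simp [hx]), fun hx ↦ by
      simpa using augmentation_symm_eq_zero hI hψ hx⟩
  exact ⟨α, fun x ↦ by simpa [augmentation_single] using hα (single 1 x)⟩

end Swap

theorem exists_common_base_of_single_one {A : Type*} {B : Type v} [CommRing A] [CommRing B]
    {ψ : A[G] ≃+* B[H]} {b : G →* Bˣ} {a : H →* Aˣ}
    (hb : ∀ g, ψ (single g 1) = single 1 (b g : B))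
    (ha : ∀ h, ψ (single 1 (a h : A)) = single h 1) :
    ∃ (C : Type v) (_ : CommRing C), Nonempty (A ≃+* C[H]) ∧ Nonempty (B ≃+* C[G]) := by
  obtain ⟨α, hα⟩ := exists_ringEquiv_quotient_monoidAlgebra rfl hb
  refine ⟨_, _, ⟨α⟩, nonempty_ringEquiv_of_single_one
    (φ := ψ.symm.trans ((mapRingEquiv G α).trans commRingEquiv)) fun h ↦ ?_⟩
  have : ψ.symm (single h 1) = single 1 (a h : A) := ψ.symm_apply_eq.2 (ha h).symm
  simp [this, hα, ha]

theorem exists_common_base_of_single_one_eq_single {A : Type*} {B : Type v} [CommRing A]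
    [CommRing B] [Finite G] [Finite H] {φ : A[G] ≃+* B[H]} {d : G →* H} {b : G →* Bˣ}
    {d' : H →* G} {a : H →* Aˣ} (hφ : ∀ g, φ (single g 1) = single (d g) (b g : B))
    (hφ' : ∀ h, φ.symm (single h 1) = single (d' h) (a h : A))
    (hd : MonoidHom.FixedPointFree (d'.comp d)) :
    ∃ (C : Type v) (_ : CommRing C), Nonempty (A ≃+* C[H]) ∧ Nonempty (B ≃+* C[G]) := by
  have hd' : MonoidHom.FixedPointFree (d.comp d') := fun x hx ↦ by
    have : d' x = 1 := hd _ (congrArg d' hx)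
    rw [← hx, MonoidHom.comp_apply, this, map_one]
  obtain ⟨ψ, hψ, hψ'⟩ := exists_ringEquiv_single_one_swap hφ hφ' hd hd'
  exact exists_common_base_of_single_one hψ hψ'

theorem exists_common_base_of_isMonomial {A : Type*} {B : Type v} [CommRing A] [CommRing B]
    [Finite G] [Finite H] {φ : A[G] ≃+* B[H]} (hφ : IsMonomial φ.toRingHom)
    (hφ' : IsMonomial φ.symm.toRingHom)
    (h : ∀ (d : G →* H) (d' : H →* G), MonoidHom.FixedPointFree (d'.comp d)) :
    ∃ (C : Type v) (_ : CommRing C), Nonempty (A ≃+* C[H]) ∧ Nonempty (B ≃+* C[G]) := by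
  obtain ⟨d, b, hb⟩ := hφ.exists_monoidHom
  obtain ⟨d', a, ha⟩ := hφ'.exists_monoidHom
  exact exists_common_base_of_single_one_eq_single hb ha (h d d')

theorem nonempty_ringEquiv_of_isMonomial [Finite G] (hG : IsIndecomposable G) {φ : A[G] ≃+* B[G]}
    (hφ : IsMonomial φ.toRingHom) (hφ' : IsMonomial φ.symm.toRingHom) : Nonempty (A ≃+* B) := by
  obtain ⟨d, b, hb⟩ := hφ.exists_monoidHom
  obtain ⟨d', a, ha⟩ := hφ'.exists_monoidHom
  by_cases hd : MonoidHom.FixedPointFree (d'.comp d)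
  · obtain ⟨C, _, ⟨α⟩, ⟨β⟩⟩ := exists_common_base_of_single_one_eq_single hb ha hd
    exact ⟨α.trans β.symm⟩
  · exact nonempty_ringEquiv_of_single_one_eq_single
      (.ofBijective d (hG.bijective_of_not_fixedPointFree hd)) b hb

end MonomialEquiv

section Pi

/-- Group rings of a finite group commute with products of base rings. -/
noncomputable def piRingEquiv {ι : Type*} (C : ι → Type*) [∀ i, CommRing (C i)] (G : Type*)
    [CommGroup G] [Finite G] : (Π i, C i)[G] ≃+* Π i, (C i)[G] :=
  RingEquiv.ofBijective (RingHom.pi fun i ↦ mapRingHom G (Pi.evalRingHom C i))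
    ⟨fun x y hxy ↦ by
      ext g i
      simpa using congr(($(congrFun hxy i)).coeff g),
    fun y ↦ ⟨ofCoeff (Finsupp.equivFunOnFinite.symm fun g i ↦ (y i).coeff g), by
      ext i g
      simp⟩⟩

variable {A B G H : Type*} [CommRing A] [IsReduced A] [Module.IsTorsionFree ℤ A]
  [Algebra.IsIntegral ℤ A] [CommRing B] [IsReduced B] [Module.IsTorsionFree ℤ B]
  [Algebra.IsIntegral ℤ B] [CommGroup G] [Finite G]

theorem nonempty_ringEquiv_of_isIndecomposable (hG : IsIndecomposable G) (φ : A[G] ≃+* B[G]) :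
    Nonempty (A ≃+* B) := by
  obtain ⟨n, A', B', _, _, ψ, ⟨α⟩, ⟨β⟩, hψ⟩ := exists_monomial_decomposition φ
  let γ i : A' i ≃+* B' i := (nonempty_ringEquiv_of_isMonomial hG (hψ i).1 (hψ i).2).some
  exact ⟨α.trans ((RingEquiv.piCongrRight γ).trans β.symm)⟩

theorem exists_common_base_of_fixedPointFree {A : Type*} {B : Type v} [CommRing A] [IsReduced A]
    [Module.IsTorsionFree ℤ A] [Algebra.IsIntegral ℤ A] [CommRing B] [IsReduced B]
    [Module.IsTorsionFree ℤ B] [Algebra.IsIntegral ℤ B] [CommGroup H] [Finite H]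
    (φ : A[G] ≃+* B[H])
    (h : ∀ (d : G →* H) (d' : H →* G), MonoidHom.FixedPointFree (d'.comp d)) :
    ∃ (C : Type v) (_ : CommRing C), Nonempty (A ≃+* C[H]) ∧ Nonempty (B ≃+* C[G]) := by
  obtain ⟨n, A', B', _, _, ψ, ⟨α⟩, ⟨β⟩, hψ⟩ := exists_monomial_decomposition φ
  choose C _ hA hB using fun i ↦ exists_common_base_of_isMonomial (hψ i).1 (hψ i).2 h
  exact ⟨Π i, C i, inferInstance,
    ⟨α.trans ((RingEquiv.piCongrRight fun i ↦ (hA i).some).trans (piRingEquiv C H).symm)⟩,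
    ⟨β.trans ((RingEquiv.piCongrRight fun i ↦ (hB i).some).trans (piRingEquiv C G).symm)⟩⟩

end Pi

section Order

theorem isIntegral_int_of_finite (A R : Type*) [CommRing A] [Algebra.IsIntegral ℤ A] [CommRing R]
    [Algebra A R] [Module.Finite A R] : Algebra.IsIntegral ℤ R :=
  Algebra.IsIntegral.trans A

theorem finite_and_free_int_of_injective {A C : Type*} [CommRing A] [CommRing C]
    [Module.Finite ℤ A] [Module.Free ℤ A] {f : C →+* A} (hf : Function.Injective f) :
    Module.Finite ℤ C ∧ Module.Free ℤ C := by
  have : Module.Finite ℤ C := .of_injective f.toIntAlgHom.toLinearMap hf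
  have : Module.IsTorsionFree ℤ C := hf.moduleIsTorsionFree f fun n x ↦ map_zsmul f n x
  exact ⟨inferInstance, inferInstance⟩

end Order

section CommonBase

variable {A B G H : Type*} [CommRing A] [CommRing B] [CommGroup G] [CommGroup H]

theorem nonempty_ringEquiv_of_common_base {C I J : Type*} [CommRing C] [CommGroup I] [CommGroup J]
    (α : A ≃+* C[I]) (β : B ≃+* C[J]) (ρ : I × G ≃* J × H) : Nonempty (A[G] ≃+* B[H]) :=
  ⟨(((mapRingEquiv G α).trans (curryRingEquiv (R := C)).symm).trans
    (mapDomainRingEquiv C (MulEquiv.prodComm.trans (ρ.trans MulEquiv.prodComm)))).trans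
    ((curryRingEquiv (R := C)).trans (mapRingEquiv H β.symm))⟩

theorem nonempty_prod_mulEquiv_prod {I J P K L : Type*} [CommGroup I] [CommGroup J] [CommGroup P]
    [CommGroup K] [CommGroup L] (γ : G ≃* P × K) (δ : H ≃* P × L) (ρ : I × K ≃* J × L) :
    Nonempty (I × G ≃* J × H) :=
  let γ' : I × G ≃* (I × K) × P :=
    (MulEquiv.prodCongr (.refl I) (γ.trans .prodComm)).trans MulEquiv.prodAssoc.symm
  let δ' : J × H ≃* (J × L) × P :=
    (MulEquiv.prodCongr (.refl J) (δ.trans .prodComm)).trans MulEquiv.prodAssoc.symm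
  ⟨γ'.trans ((ρ.prodCongr (.refl P)).trans δ'.symm)⟩

theorem IsDirectFactor.exists_mulEquiv_prod_card_lt [Finite G] {P : Subgroup G} (hP : P ≠ ⊥)
    (h : IsDirectFactor P G) :
    ∃ K : Subgroup G, Nat.card K < Nat.card G ∧ Nonempty (G ≃* P × K) := by
  obtain ⟨K, ⟨γ⟩⟩ := h.exists_mulEquiv_prod
  refine ⟨K, ?_, ⟨γ⟩⟩
  rw [Nat.card_congr γ.toEquiv, Nat.card_prod]
  exact lt_mul_of_one_lt_left Nat.card_pos (P.one_lt_card_iff_ne_bot.2 hP)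

theorem nonempty_ringEquiv_of_mulEquiv_prod [IsReduced A] [Module.IsTorsionFree ℤ A]
    [Algebra.IsIntegral ℤ A] [IsReduced B] [Module.IsTorsionFree ℤ B] [Algebra.IsIntegral ℤ B]
    {P K L : Type*} [CommGroup P] [Finite P] [CommGroup K] [Finite K] [CommGroup L] [Finite L]
    (hP : IsIndecomposable P) (γ : G ≃* P × K) (δ : H ≃* P × L) (φ : A[G] ≃+* B[H]) :
    Nonempty (A[K] ≃+* B[L]) :=
  have := isReduced_monoidAlgebra (B := A) (H := K)
  have := isReduced_monoidAlgebra (B := B) (H := L)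
  have := isIntegral_int_of_finite A A[K]
  have := isIntegral_int_of_finite B B[L]
  nonempty_ringEquiv_of_isIndecomposable hP <|
    (((mapDomainRingEquiv A γ).trans curryRingEquiv).symm.trans φ).trans
      ((mapDomainRingEquiv B δ).trans curryRingEquiv)

theorem exists_common_base {A : Type*} {B : Type v} [CommRing A] [IsReduced A]
    [Module.IsTorsionFree ℤ A] [Algebra.IsIntegral ℤ A] [CommRing B] [IsReduced B]
    [Module.IsTorsionFree ℤ B] [Algebra.IsIntegral ℤ B] {G : Type w} {H : Type x} [CommGroup G]
    [Finite G] [CommGroup H] [Finite H] (φ : A[G] ≃+* B[H]) :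
    ∃ (C : Type v) (_ : CommRing C) (I : Type x) (_ : CommGroup I) (_ : Finite I)
      (J : Type w) (_ : CommGroup J) (_ : Finite J),
      Nonempty (A ≃+* C[I]) ∧ Nonempty (B ≃+* C[J]) ∧ Nonempty (I × G ≃* J × H) := by
  induction hn : Nat.card G using Nat.strong_induction_on generalizing G H with | _ n ih
  by_cases h : ∀ (d : G →* H) (d' : H →* G), MonoidHom.FixedPointFree (d'.comp d)
  · obtain ⟨C, _, hA, hB⟩ := exists_common_base_of_fixedPointFree φ h
    exact ⟨C, _, H, _, ‹_›, G, _, ‹_›, hA, hB, ⟨.prodComm⟩⟩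
  · push Not at h
    obtain ⟨d, d', hd⟩ := h
    obtain ⟨P, hP, hPi, hPG, hPH⟩ := exists_isIndecomposable_of_not_fixedPointFree hd
    obtain ⟨K, hK, ⟨γ⟩⟩ := hPG.exists_mulEquiv_prod_card_lt hP
    obtain ⟨L, ⟨δ⟩⟩ := hPH.exists_mulEquiv_prod
    obtain ⟨θ⟩ := nonempty_ringEquiv_of_mulEquiv_prod hPi γ δ φ
    obtain ⟨C, _, I, _, hI, J, _, hJ, hA, hB, ⟨ρ⟩⟩ := ih _ (hK.trans_eq hn) θ rfl
    exact ⟨C, _, I, _, hI, J, _, hJ, hA, hB, nonempty_prod_mulEquiv_prod γ δ ρ⟩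

/-- Change of universes for group rings. -/
noncomputable def uliftRingEquiv (C : Type v) (M : Type x) [CommRing C] [CommGroup M] :
    C[M] ≃+* (ULift.{u} C)[ULift.{w} M] :=
  (mapRingEquiv M ULift.ringEquiv.symm).trans (mapDomainRingEquiv _ MulEquiv.ulift.symm)

end CommonBase

theorem groupring_iso_iff_common_base_general
    {A : Type u} [CommRing A] [IsReduced A] [Module.IsTorsionFree ℤ A] [Algebra.IsIntegral ℤ A]
    {B : Type v} [CommRing B]
    {G : Type w} [CommGroup G] [Finite G] {H : Type x} [CommGroup H] [Finite H] :
    Nonempty (MonoidAlgebra A G ≃+* MonoidAlgebra B H) ↔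
      ∃ (C : Type (max u v)) (_ : CommRing C)
        (I : Type (max w x)) (_ : CommGroup I) (_ : Finite I)
        (J : Type (max w x)) (_ : CommGroup J) (_ : Finite J),
        Nonempty (A ≃+* MonoidAlgebra C I) ∧ Nonempty (B ≃+* MonoidAlgebra C J) ∧
          Nonempty ((I × G) ≃* (J × H)) := by
  constructor
  · rintro ⟨φ⟩
    let f : B →+* A[G] := φ.symm.toRingHom.comp singleOneRingHom
    have hf : Function.Injective f := φ.symm.injective.comp single_right_injective
    have : IsReduced A[G] := isReduced_monoidAlgebra
    have := isIntegral_int_of_finite A A[G]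
    have : IsReduced B := isReduced_of_injective f hf
    have : Module.IsTorsionFree ℤ B := hf.moduleIsTorsionFree f fun n x ↦ map_zsmul f n x
    have : Algebra.IsIntegral ℤ B := .of_injective f.toIntAlgHom hf
    obtain ⟨C, _, I, _, _, J, _, _, ⟨α⟩, ⟨β⟩, ⟨ρ⟩⟩ := exists_common_base φ
    exact ⟨ULift C, inferInstance, ULift I, inferInstance, inferInstance, ULift J, inferInstance,
      inferInstance, ⟨α.trans (uliftRingEquiv C I)⟩, ⟨β.trans (uliftRingEquiv C J)⟩,
      ⟨(MulEquiv.ulift.prodCongr (.refl G)).trans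
        (ρ.trans (MulEquiv.ulift.symm.prodCongr (.refl H)))⟩⟩
  · rintro ⟨C, _, I, _, _, J, _, _, ⟨α⟩, ⟨β⟩, ⟨ρ⟩⟩
    exact nonempty_ringEquiv_of_common_base α β ρ

/-- Let `A` and `B` be reduced orders and `G`, `H` finite abelian groups.
Then `A[G] ≅ B[H]` as rings iff there exist an order `C` and finite abelian groups `I`, `J`
with `A ≅ C[I]`, `B ≅ C[J]` as rings and `I × G ≅ J × H` as groups. -/
theorem groupring_iso_iff_common_base
    {A : Type u} [CommRing A] [Module.Free ℤ A] [Module.Finite ℤ A] [IsReduced A]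
    {B : Type v} [CommRing B] [Module.Free ℤ B] [Module.Finite ℤ B] [IsReduced B]
    {G : Type w} [CommGroup G] [Finite G] {H : Type x} [CommGroup H] [Finite H] :
    Nonempty (MonoidAlgebra A G ≃+* MonoidAlgebra B H) ↔
      ∃ (C : Type (max u v)) (_ : CommRing C) (_ : Module.Free ℤ C) (_ : Module.Finite ℤ C)
        (I : Type (max w x)) (_ : CommGroup I) (_ : Finite I)
        (J : Type (max w x)) (_ : CommGroup J) (_ : Finite J),
        Nonempty (A ≃+* MonoidAlgebra C I) ∧ Nonempty (B ≃+* MonoidAlgebra C J) ∧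
          Nonempty ((I × G) ≃* (J × H)) := by
  refine groupring_iso_iff_common_base_general.trans ⟨?_, ?_⟩
  · rintro ⟨C, _, I, _, _, J, _, _, ⟨α⟩, h⟩
    obtain ⟨_, _⟩ := finite_and_free_int_of_injective (f := α.symm.toRingHom.comp singleOneRingHom)
      (α.symm.injective.comp single_right_injective)
    exact ⟨C, ‹_›, ‹_›, ‹_›, I, ‹_›, ‹_›, J, ‹_›, ‹_›, ⟨α⟩, h⟩
  · rintro ⟨C, _, _, _, h⟩
    exact ⟨C, ‹_›, h⟩
end

section
/- Let R be a non-zero reduced order. Then there exist a stark ring A and a finite abelian group G such that R is isomorphic to the group ring A[G] as rings; moreover A is unique up to ring isomorphism and G is unique up to group isomorphism, i.e., if B is a stark ring and H is a finite abelian group with R isomorphic to B[H] as rings, then A is isomorphic to B as rings and G is isomorphic to H as groups. -/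
/-- A commutative ring is stark if it is not isomorphic to any group ring `A[G]`
with `A` a ring and `G` a non-trivial group. -/
def IsStark (R : Type u) [CommRing R] : Prop :=
  ∀ (A : Type u) (_ : Ring A) (G : Type u) (_ : Group G),
    Nontrivial G → IsEmpty (R ≃+* MonoidAlgebra A G)

/-!
Embed a reduced order `R` as a lattice in the hermitian space of functions on its complex points.
The components of a grading of `R` by a finite abelian group are orthogonal, because characters of
the group permute the complex points. Two facts follow. A shortest vector on which the projections
of two gradings fail to commute would be fixed or killed by each of them, so there is none. The
norm of a non-zero algebraic integer has absolute value at least one; so, by the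
arithmetic-geometric mean inequality, if every non-zero value of `x` at a complex point has
absolute value one, any two orthogonal summands of `x` have product zero. Therefore idempotents
have degree one, and if `R` is connected, units of finite order are homogeneous.

Hence, over a connected `R`, identifications `R ≅ A[G]` and `R ≅ B[H]` give degree maps `α : G →*
H` and `β : H →* G`, and `A` and `B` acquire compatible gradings by `H` and `G`. In the former,
the image in `A` of an element `h` of `H` is a unit of degree `h / α (β h)`. Fitting's
decomposition for the endomorphism `h ↦ h / α (β h)` of `H` and its counterpart on `G` yields a
ring `C` and groups with `A ≅ C[K]`, `B ≅ C[L]`, `H ≅ I × K` and `G ≅ I × L`. So if `G ≅ H`, then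
`K ≅ L` and `A ≅ B`; and if a cyclic group of prime power order occurs more often in `H` than in
`G`, then it occurs in `K`, and `A` is a group ring over it. A general `R` splits along its
idempotents into connected pieces, over which `A` and `B` split as well, and both conclusions
carry over to `R` because the groups involved are the same for all pieces.
-/

namespace Stark

open MonoidAlgebra
open scoped ComplexConjugate

/-! ### Complex points of an order -/

section ComplexHoms

variable {R : Type*} [CommRing R] [Module.Finite ℤ R]

instance : Finite (R →+* ℂ) := .of_injective RingHom.toIntAlgHom RingHom.toIntAlgHom_injective

noncomputable instance : Fintype (R →+* ℂ) := .ofFinite _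

lemma isIntegral_ringHom_apply {K : Type*} [CommRing K] (σ : R →+* K) (x : R) :
    IsIntegral ℤ (σ x) :=
  (Algebra.IsIntegral.isIntegral (R := ℤ) x).map σ.toIntAlgHom

lemma exists_ringHom_complex_ker_eq [Module.IsTorsionFree ℤ R] {P : Ideal R}
    (hP : P ∈ minimalPrimes R) : ∃ σ : R →+* ℂ, RingHom.ker σ = P := by
  have : P.IsPrime := hP.1.1
  have hinj : Function.Injective (algebraMap ℤ (R ⧸ P)) := by
    refine (injective_iff_map_eq_zero _).2 fun n hn ↦ by_contra fun hn0 ↦ ?_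
    refine Set.disjoint_left.1 (Ideal.disjoint_nonZeroDivisors_of_mem_minimalPrimes hP)
      (show (n : R) ∈ (P : Set R) from Ideal.Quotient.eq_zero_iff_mem.1 (by simpa using hn)) ?_
    exact mem_nonZeroDivisors_iff_right.2 fun x hx ↦
      (smul_eq_zero_iff_right hn0).1 ((zsmul_eq_mul' x n).trans hx)
  have : FaithfulSMul ℤ (R ⧸ P) := (faithfulSMul_iff_algebraMap_injective _ _).2 hinj
  have : Module.IsTorsionFree ℤ (R ⧸ P) := inferInstance
  have : Algebra.IsAlgebraic ℤ (R ⧸ P) := inferInstance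
  let τ : (R ⧸ P) →ₐ[ℤ] ℂ := IsAlgClosed.lift
  have hτ : RingHom.ker (τ : (R ⧸ P) →+* ℂ) = ⊥ := by
    refine Ideal.eq_bot_of_comap_eq_bot (R := ℤ) (eq_bot_iff.2 fun n hn ↦ ?_)
    simpa using hn
  refine ⟨(τ : (R ⧸ P) →+* ℂ).comp (Ideal.Quotient.mk P), ?_⟩
  rw [← RingHom.comap_ker, hτ, ← RingHom.ker_eq_comap_bot, Ideal.mk_ker]

lemma eq_zero_of_forall_ringHom_complex [IsReduced R] [Module.IsTorsionFree ℤ R] {x : R}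
    (hx : ∀ σ : R →+* ℂ, σ x = 0) : x = 0 := by
  rw [← isNilpotent_iff_eq_zero, ← mem_nilradical, nilradical, ← Ideal.sInf_minimalPrimes,
    Submodule.mem_sInf]
  intro P hP
  obtain ⟨σ, rfl⟩ := exists_ringHom_complex_ker_eq hP
  exact hx σ

variable (R) in
lemma exists_numberField_forall_ringHom_mem :
    ∃ K : IntermediateField ℚ ℂ, NumberField K ∧ ∀ (σ : R →+* ℂ) (x : R), σ x ∈ K := by
  obtain ⟨s, hs⟩ := (Module.Finite.fg_top : (⊤ : Submodule ℤ R).FG)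
  let T : Set ℂ := Set.range fun p : (R →+* ℂ) × s ↦ p.1 p.2
  have : Finite T := (Set.finite_range _).to_subtype
  refine ⟨IntermediateField.adjoin ℚ T, { to_finiteDimensional := ?_ }, fun σ x ↦ ?_⟩
  · refine IntermediateField.finiteDimensional_adjoin ?_
    rintro _ ⟨⟨σ, x⟩, rfl⟩
    exact (isIntegral_ringHom_apply σ (x : R)).tower_top
  · have hx : x ∈ Submodule.span ℤ (s : Set R) := hs ▸ Submodule.mem_top
    induction hx using Submodule.span_induction with
    | mem x hx => exact IntermediateField.subset_adjoin _ _ ⟨(σ, ⟨x, hx⟩), rfl⟩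
    | zero => simp only [map_zero, zero_mem]
    | add x y _ _ hx hy => simpa only [map_add] using add_mem hx hy
    | smul n x _ hx => simpa only [map_zsmul] using zsmul_mem hx n

lemma finite_setOf_forall_norm_le [IsReduced R] [Module.IsTorsionFree ℤ R] (C : ℝ) :
    {x : R | ∀ σ : R →+* ℂ, ‖σ x‖ ≤ C}.Finite := by
  obtain ⟨K, _, hK⟩ := exists_numberField_forall_ringHom_mem R
  let res (σ : R →+* ℂ) : R →+* K := σ.codRestrict K.toSubfield (hK σ)
  have hinj : Function.Injective fun (x : R) (σ : R →+* ℂ) ↦ res σ x := fun x y hxy ↦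
    sub_eq_zero.1 <| eq_zero_of_forall_ringHom_complex fun σ ↦ by
      rw [map_sub, sub_eq_zero]
      exact congrArg Subtype.val (congrFun hxy σ)
  have hfin := Set.Finite.pi' fun _ : R →+* ℂ ↦ NumberField.Embeddings.finite_of_norm_le K ℂ C
  exact (hfin.preimage hinj.injOn).subset fun x hx σ ↦
    ⟨isIntegral_ringHom_apply (res σ) x, fun φ ↦ hx (φ.comp (res σ))⟩

/-- The complex points of `R` at which `x` does not vanish. -/
noncomputable def support (x : R) : Finset (R →+* ℂ) := {σ | σ x ≠ 0}

lemma mem_support {x : R} {σ : R →+* ℂ} : σ ∈ support x ↔ σ x ≠ 0 := by simp [support]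

-- The product is a non-zero algebraic integer all of whose conjugates are equal.
lemma one_le_norm_prod_support (x : R) : 1 ≤ ‖∏ σ ∈ support x, σ x‖ := by
  obtain ⟨K, _, hK⟩ := exists_numberField_forall_ringHom_mem R
  let res (σ : R →+* ℂ) : R →+* K := σ.codRestrict K.toSubfield (hK σ)
  let P : K := ∏ σ ∈ support x, res σ x
  have hP : (P : ℂ) = ∏ σ ∈ support x, σ x := map_prod K.val _ _
  have hP0 : P ≠ 0 := Finset.prod_ne_zero_iff.2 fun σ hσ h ↦
    mem_support.1 hσ (congrArg Subtype.val h)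
  have hPint : IsIntegral ℤ P := .prod _ fun σ _ ↦ isIntegral_ringHom_apply (res σ) x
  have hconj (φ : K →+* ℂ) : φ P = P := by
    have hφ : Function.Injective fun σ : R →+* ℂ ↦ φ.comp (res σ) := fun σ τ h ↦
      RingHom.ext fun y ↦ congrArg Subtype.val (φ.injective (RingHom.congr_fun h y))
    rw [hP, map_prod]
    refine Finset.prod_bijective _ (Finite.injective_iff_bijective.1 hφ) (fun σ ↦ ?_)
      fun _ _ ↦ rfl
    rw [mem_support, mem_support]
    exact not_congr ⟨fun h ↦ (congrArg φ (Subtype.ext h)).trans (map_zero φ),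
      fun h ↦ congrArg Subtype.val ((map_eq_zero φ).1 h)⟩
  obtain ⟨φ, hφ⟩ := NumberField.exists_conjugate_one_le_norm (α := ⟨P, hPint⟩)
    fun h ↦ hP0 (congrArg Subtype.val h)
  exact hP ▸ hconj φ ▸ hφ

end ComplexHoms

section Lattice

lemma projections_commute_of_inner_eq_zero {𝕜 M E : Type*} [RCLike 𝕜] [AddCommGroup M]
    [NormedAddCommGroup E] [InnerProductSpace 𝕜 E] {j : M →+ E} (hj : Function.Injective j)
    (hfin : ∀ C : ℝ, {x : M | ‖j x‖ < C}.Finite) {p q : M →+ M}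
    (hp : ∀ x, inner 𝕜 (j (p x)) (j (x - p x)) = 0)
    (hq : ∀ x, inner 𝕜 (j (q x)) (j (x - q x)) = 0) (x : M) : p (q x) = q (p x) := by
  by_contra hx
  obtain ⟨y, ⟨hyx, hy⟩, hmin⟩ := Set.exists_min_image
    {y | ‖j y‖ < ‖j x‖ + 1 ∧ p (q y) ≠ q (p y)} (fun y ↦ ‖j y‖)
    ((hfin _).subset fun _ h ↦ h.1) ⟨x, lt_add_one _, hx⟩
  have hshort {z : M} (hz : ‖j z‖ < ‖j y‖) : p (q z) = q (p z) :=
    by_contra fun h ↦ (hmin z ⟨hz.trans hyx, h⟩).not_gt hz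
  have htriv {r : M →+ M} (hr : ∀ x, inner 𝕜 (j (r x)) (j (x - r x)) = 0) :
      r y = 0 ∨ r y = y := by
    by_contra! h
    have hpyth := norm_add_sq_eq_norm_sq_add_norm_sq_of_inner_eq_zero _ _ (hr y)
    rw [← map_add, add_sub_cancel] at hpyth
    have hr0 : 0 < ‖j (r y)‖ := norm_pos_iff.2 ((map_ne_zero_iff j hj).2 h.1)
    have hr1 : 0 < ‖j (y - r y)‖ :=
      norm_pos_iff.2 ((map_ne_zero_iff j hj).2 (sub_ne_zero.2 h.2.symm))
    have hlt₁ : ‖j (r y)‖ < ‖j y‖ := by nlinarith only [hpyth, hr1, norm_nonneg (j y)]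
    have hlt₂ : ‖j (y - r y)‖ < ‖j y‖ := by nlinarith only [hpyth, hr0, norm_nonneg (j y)]
    refine hy ?_
    simpa only [← map_add, add_sub_cancel] using congrArg₂ (· + ·) (hshort hlt₁) (hshort hlt₂)
  refine hy ?_
  rcases htriv hp with hp | hp <;> rcases htriv hq with hq | hq <;> simp only [hp, hq, map_zero]

end Lattice

section ComplexEmbedding

variable {R : Type*} [CommRing R]

/-- `R` as a lattice in a hermitian space, the coordinates being the complex points of `R`. -/
noncomputable def complexEmbedding : R →+ EuclideanSpace ℂ (R →+* ℂ) where
  toFun x := WithLp.toLp 2 fun σ ↦ σ x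
  map_zero' := by ext; simp
  map_add' _ _ := by ext; simp

lemma complexEmbedding_apply (x : R) (σ : R →+* ℂ) : complexEmbedding x σ = σ x := rfl

variable [Module.Finite ℤ R]

lemma inner_complexEmbedding (x y : R) :
    inner ℂ (complexEmbedding x) (complexEmbedding y) = ∑ σ : R →+* ℂ, σ y * conj (σ x) := by
  simp only [PiLp.inner_apply, complexEmbedding_apply, RCLike.inner_apply]

lemma norm_complexEmbedding_sq (x : R) :
    ‖complexEmbedding x‖ ^ 2 = ∑ σ : R →+* ℂ, ‖σ x‖ ^ 2 := by
  simp only [EuclideanSpace.norm_sq_eq, complexEmbedding_apply]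

lemma card_support_le_norm_complexEmbedding_sq (x : R) :
    ((support x).card : ℝ) ≤ ‖complexEmbedding x‖ ^ 2 := by
  have hpos {σ : R →+* ℂ} (hσ : σ ∈ support x) : 0 < ‖σ x‖ := norm_pos_iff.2 (mem_support.1 hσ)
  have hprod : 0 ≤ ∑ σ ∈ support x, Real.log ‖σ x‖ := by
    rw [← Real.log_prod fun σ hσ ↦ (hpos hσ).ne', ← norm_prod]
    exact Real.log_nonneg (one_le_norm_prod_support x)
  calc ((support x).card : ℝ) ≤ ∑ σ ∈ support x, (1 + 2 * Real.log ‖σ x‖) := by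
        rw [Finset.sum_add_distrib, ← Finset.mul_sum, Finset.sum_const, nsmul_one]
        linarith
    _ ≤ ∑ σ ∈ support x, ‖σ x‖ ^ 2 := Finset.sum_le_sum fun σ hσ ↦ by
        have := Real.log_le_sub_one_of_pos (pow_pos (hpos hσ) 2)
        rw [Real.log_pow, Nat.cast_ofNat] at this
        linarith
    _ ≤ ‖complexEmbedding x‖ ^ 2 := by
        rw [norm_complexEmbedding_sq]
        exact Finset.sum_le_univ_sum_of_nonneg fun _ ↦ by positivity

variable [IsReduced R] [Module.IsTorsionFree ℤ R]

lemma complexEmbedding_injective : Function.Injective (complexEmbedding (R := R)) :=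
  (injective_iff_map_eq_zero _).2 fun _ hx ↦ eq_zero_of_forall_ringHom_complex fun σ ↦
    congrArg (· σ) hx

lemma finite_setOf_norm_complexEmbedding_lt (C : ℝ) :
    {x : R | ‖complexEmbedding x‖ < C}.Finite :=
  (finite_setOf_forall_norm_le C).subset fun x hx σ ↦
    (PiLp.norm_apply_le (complexEmbedding x) σ).trans (le_of_lt hx)

lemma mul_eq_zero_of_inner_complexEmbedding_eq_zero {x y : R}
    (hxy : inner ℂ (complexEmbedding x) (complexEmbedding y) = 0)
    (hadd : ∀ σ : R →+* ℂ, σ (x + y) = 0 ∨ ‖σ (x + y)‖ = 1) : x * y = 0 := by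
  classical
  have hnorm : ‖complexEmbedding (x + y)‖ ^ 2 = (support (x + y)).card := by
    rw [norm_complexEmbedding_sq, support, Finset.card_filter, Nat.cast_sum]
    refine Finset.sum_congr rfl fun σ _ ↦ ?_
    rcases hadd σ with h | h
    · rw [h, if_neg (not_not.2 rfl), norm_zero, Nat.cast_zero, zero_pow two_ne_zero]
    · rw [h, if_pos (norm_ne_zero_iff.1 (h.trans_ne one_ne_zero)), Nat.cast_one, one_pow]
  have hpyth := norm_add_sq_eq_norm_sq_add_norm_sq_of_inner_eq_zero _ _ hxy
  rw [← map_add, ← sq, ← sq, ← sq, hnorm] at hpyth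
  have hcard : (support x).card + (support y).card ≤ (support (x + y)).card := by
    have hx := card_support_le_norm_complexEmbedding_sq x
    have hy := card_support_le_norm_complexEmbedding_sq y
    exact_mod_cast (add_le_add hx hy).trans_eq hpyth.symm
  have hsub : support (x + y) ⊆ support x ∪ support y := fun σ ↦ by
    simp only [Finset.mem_union, mem_support, map_add]
    contrapose!
    rintro ⟨hx, hy⟩
    rw [hx, hy, add_zero]
  have hdisj : Disjoint (support x) (support y) := by
    rw [← Finset.card_union_eq_card_add_card]
    exact (Finset.card_union_le _ _).antisymm (hcard.trans (Finset.card_le_card hsub))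
  refine eq_zero_of_forall_ringHom_complex fun σ ↦ ?_
  by_contra hσ
  rw [map_mul] at hσ
  exact Finset.disjoint_left.1 hdisj (mem_support.2 (left_ne_zero_of_mul hσ))
    (mem_support.2 (right_ne_zero_of_mul hσ))

end ComplexEmbedding

/-! ### Gradings by abelian groups -/

/-- A ring with exactly two idempotents, that is, one whose spectrum is connected. -/
def IsConnectedRing (R : Type*) [CommRing R] : Prop :=
  Nontrivial R ∧ ∀ e : R, IsIdempotentElem e → e = 0 ∨ e = 1

/-- A grading of the commutative ring `S` by the abelian group `Γ`, encoded as a comodule algebra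
structure: an element `x` has degree `g` if `coaction x = single g x`, so the homogeneous
components of `x` are the coefficients of `coaction x`, and the multiplicativity of the degree is
that of `coaction`. -/
structure GroupGrading (Γ S : Type*) [CommGroup Γ] [CommRing S] where
  coaction : S →+* MonoidAlgebra S Γ
  closure_homogeneous : AddSubmonoid.closure {x | ∃ g, coaction x = single g x} = ⊤

namespace GroupGrading

section Basic

variable {Γ Γ' S : Type*} [CommGroup Γ] [CommGroup Γ'] [CommRing S] (𝒢 : GroupGrading Γ S)

/-- `x` is homogeneous of degree `g`; zero is so for every `g`. -/
def IsHomogeneous (g : Γ) (x : S) : Prop := 𝒢.coaction x = single g x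

/-- The projection to the homogeneous component of degree `g`. -/
noncomputable def component (g : Γ) : S →+ S where
  toFun x := (𝒢.coaction x).coeff g
  map_zero' := by simp only [map_zero, coeff_zero, Finsupp.coe_zero, Pi.zero_apply]
  map_add' x y := by simp only [map_add, coeff_add, Finsupp.coe_add, Pi.add_apply]

/-- The subring of elements of degree one. -/
noncomputable def degreeOne : Subring S := 𝒢.coaction.eqLocus singleOneRingHom

variable {𝒢} {g h : Γ} {x y : S}

lemma mem_degreeOne : x ∈ 𝒢.degreeOne ↔ 𝒢.IsHomogeneous 1 x := Iff.rfl

lemma IsHomogeneous.mul (hx : 𝒢.IsHomogeneous g x) (hy : 𝒢.IsHomogeneous h y) :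
    𝒢.IsHomogeneous (g * h) (x * y) := by
  rw [IsHomogeneous, map_mul, hx, hy, single_mul_single]

lemma IsHomogeneous.degree_unique (hg : 𝒢.IsHomogeneous g x) (hh : 𝒢.IsHomogeneous h x)
    (hx : x ≠ 0) : g = h :=
  (single_left_inj hx).1 (hg.symm.trans hh)

lemma IsHomogeneous.add (hx : 𝒢.IsHomogeneous g x) (hy : 𝒢.IsHomogeneous g y) :
    𝒢.IsHomogeneous g (x + y) := by
  rw [IsHomogeneous, map_add, hx, hy, single_add]

lemma isHomogeneous_zero : 𝒢.IsHomogeneous g 0 := by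
  rw [IsHomogeneous, map_zero, single_zero]

variable (𝒢) in
lemma homogeneous_induction {p : S → Prop} (hom : ∀ g x, 𝒢.IsHomogeneous g x → p x)
    (add : ∀ x y, p x → p y → p (x + y)) (x : S) : p x := by
  have hx : x ∈ AddSubmonoid.closure {x | ∃ g, 𝒢.coaction x = single g x} :=
    𝒢.closure_homogeneous ▸ AddSubmonoid.mem_top x
  induction hx using AddSubmonoid.closure_induction with
  | mem x hx => exact hx.elim fun g hg ↦ hom g x hg
  | zero => exact hom 1 0 isHomogeneous_zero
  | add x y _ _ hx hy => exact add x y hx hy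

lemma IsHomogeneous.component_eq [DecidableEq Γ] (hx : 𝒢.IsHomogeneous g x) (h : Γ) :
    𝒢.component h x = if h = g then x else 0 := by
  change (𝒢.coaction x).coeff h = _
  rw [hx, coeff_single, Finsupp.single_apply]
  simp only [eq_comm]

lemma IsHomogeneous.component_self (hx : 𝒢.IsHomogeneous g x) : 𝒢.component g x = x := by
  classical rw [hx.component_eq, if_pos rfl]

variable (𝒢) in
lemma isHomogeneous_component (g : Γ) (x : S) : 𝒢.IsHomogeneous g (𝒢.component g x) := by
  classical
  induction x using 𝒢.homogeneous_induction with
  | hom h x hx =>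
    rw [hx.component_eq]
    split_ifs with hgh
    exacts [hgh ▸ hx, isHomogeneous_zero]
  | add x y hx hy => rw [map_add]; exact hx.add hy

lemma isHomogeneous_iff_component_eq : 𝒢.IsHomogeneous g x ↔ 𝒢.component g x = x :=
  ⟨IsHomogeneous.component_self, fun h ↦ h ▸ 𝒢.isHomogeneous_component g x⟩

variable (𝒢) in
lemma sum_coeff_coaction (x : S) : ((𝒢.coaction x).coeff.sum fun _ y ↦ y) = x := by
  classical
  induction x using 𝒢.homogeneous_induction with
  | hom g x hx => rw [hx, coeff_single, Finsupp.sum_single_index rfl]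
  | add x y hx hy =>
    rw [map_add, coeff_add, Finsupp.sum_add_index' (fun _ ↦ rfl) fun _ _ _ ↦ rfl, hx, hy]

variable (𝒢) in
lemma sum_component [Fintype Γ] (x : S) : ∑ g, 𝒢.component g x = x :=
  (Finsupp.sum_fintype _ _ fun _ ↦ rfl).symm.trans (𝒢.sum_coeff_coaction x)

/-- The coarsening of a grading along a homomorphism of the grading groups. -/
noncomputable def coarsen (𝒢 : GroupGrading Γ S) (π : Γ →* Γ') : GroupGrading Γ' S where
  coaction := (mapDomainRingHom S π).comp 𝒢.coaction
  closure_homogeneous := by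
    rw [eq_top_iff, ← 𝒢.closure_homogeneous, AddSubmonoid.closure_le]
    rintro x ⟨g, hg⟩
    refine AddSubmonoid.subset_closure ⟨π g, ?_⟩
    rw [RingHom.comp_apply, hg, mapDomainRingHom_apply, mapDomain_single]

lemma IsHomogeneous.coarsen (hx : 𝒢.IsHomogeneous g x) (π : Γ →* Γ') :
    (𝒢.coarsen π).IsHomogeneous (π g) x := by
  change mapDomainRingHom S π (𝒢.coaction x) = _
  rw [hx, mapDomainRingHom_apply, mapDomain_single]

/-- The restriction of a grading along `j : A → S`, whose image is stable under taking components;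
the retraction `r` of `j` carries the components back to `A`. -/
noncomputable def restrict {A : Type*} [CommRing A] (𝒢 : GroupGrading Γ S) (j : A →+* S)
    (r : S →+* A) (hr : Function.LeftInverse r j)
    (hj : ∀ g a, 𝒢.component g (j a) ∈ j.range) : GroupGrading Γ A where
  coaction := (mapRingHom Γ r).comp (𝒢.coaction.comp j)
  closure_homogeneous := by
    have hcomp (g : Γ) (a : A) : mapRingHom Γ r (𝒢.coaction (j (r (𝒢.component g (j a))))) =
        single g (r (𝒢.component g (j a))) := by
      obtain ⟨b, hb⟩ := hj g a
      have hb' := 𝒢.isHomogeneous_component g (j a)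
      rw [← hb] at hb' ⊢
      rw [hr b, hb', mapRingHom_single, hr b]
    refine eq_top_iff.2 fun a _ ↦ ?_
    rw [← hr a, ← 𝒢.sum_coeff_coaction (j a), map_finsuppSum]
    exact sum_mem fun g _ ↦ AddSubmonoid.subset_closure ⟨g, hcomp g a⟩

lemma isHomogeneous_restrict_iff {A : Type*} [CommRing A] {j : A →+* S}
    {r : S →+* A} {hr : Function.LeftInverse r j}
    {hj : ∀ g a, 𝒢.component g (j a) ∈ j.range} {a : A} :
    (𝒢.restrict j r hr hj).IsHomogeneous g a ↔ 𝒢.IsHomogeneous g (j a) := by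
  have hcomp : j ((𝒢.restrict j r hr hj).component g a) = 𝒢.component g (j a) := by
    obtain ⟨b, hb⟩ := hj g a
    change j ((mapRingHom Γ r (𝒢.coaction (j a))).coeff g) = _
    rw [coeff_mapRingHom]
    change j (r (𝒢.component g (j a))) = _
    rw [← hb, hr b]
  rw [isHomogeneous_iff_component_eq, isHomogeneous_iff_component_eq, ← hcomp,
    hr.injective.eq_iff]

lemma bijective_liftNCRingHom_subtype {w : Γ →* S} (hw : ∀ g, 𝒢.IsHomogeneous g (w g)) :
    Function.Bijective (liftNCRingHom 𝒢.degreeOne.subtype w fun _ _ ↦ .all _ _) := by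
  have hmul (g : Γ) : w g * w g⁻¹ = 1 := by rw [← map_mul, mul_inv_cancel, map_one]
  let Φ := liftNCRingHom 𝒢.degreeOne.subtype w fun _ _ ↦ .all _ _
  have hcomp (f : MonoidAlgebra 𝒢.degreeOne Γ) (g : Γ) :
      𝒢.component g (Φ f) = f.coeff g * w g := by
    classical
    induction f using MonoidAlgebra.induction_linear with
    | zero => simp only [map_zero, coeff_zero, Finsupp.coe_zero, Pi.zero_apply,
        ZeroMemClass.coe_zero, zero_mul]
    | add f f' hf hf' => simp only [map_add, coeff_add, Finsupp.add_apply, hf, hf',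
        Subring.coe_add, add_mul]
    | single h a =>
      have hdeg := (mem_degreeOne.1 a.2).mul (hw h)
      rw [one_mul] at hdeg
      rw [liftNCRingHom_single, Subring.subtype_apply, hdeg.component_eq, coeff_single,
        Finsupp.single_apply]
      split_ifs with hgh hhg hhg
      exacts [hgh ▸ rfl, (hhg hgh.symm).elim, (hgh hhg.symm).elim, (zero_mul _).symm]
  refine ⟨(injective_iff_map_eq_zero Φ).2 fun f hf ↦ ?_, fun x ↦ ?_⟩
  · ext g
    have hg : (f.coeff g : S) * w g = 0 := by rw [← hcomp, hf, map_zero]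
    calc (f.coeff g : S) = f.coeff g * w g * w g⁻¹ := by rw [mul_assoc, hmul, mul_one]
      _ = 0 := by rw [hg, zero_mul]
  · induction x using 𝒢.homogeneous_induction with
    | hom g x hx =>
      have hdeg : x * w g⁻¹ ∈ 𝒢.degreeOne := mem_degreeOne.2 (mul_inv_cancel g ▸ hx.mul (hw g⁻¹))
      refine ⟨single g ⟨x * w g⁻¹, hdeg⟩, ?_⟩
      rw [liftNCRingHom_single, Subring.subtype_apply, mul_assoc, mul_comm (w _), hmul, mul_one]
    | add x y hx hy =>
      obtain ⟨f, rfl⟩ := hx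
      obtain ⟨f', rfl⟩ := hy
      exact ⟨f + f', map_add _ _ _⟩

/-- A ring graded by `Γ` with a multiplicative system of homogeneous units of all degrees is a
group ring over its subring of degree one. -/
noncomputable def monoidAlgebraDegreeOneEquiv {w : Γ →* S} (hw : ∀ g, 𝒢.IsHomogeneous g (w g)) :
    MonoidAlgebra 𝒢.degreeOne Γ ≃+* S :=
  .ofBijective _ (bijective_liftNCRingHom_subtype hw)

end Basic

section Orthogonality

variable {Γ R : Type*} [CommGroup Γ] [CommRing R] (𝒢 : GroupGrading Γ R)

/-- The action of the characters of the grading group on the complex points of `R`. -/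
noncomputable def twist (χ : Γ →* ℂˣ) (σ : R →+* ℂ) : R →+* ℂ :=
  (liftNCRingHom σ ((Units.coeHom ℂ).comp χ) fun _ _ ↦ .all _ _).comp 𝒢.coaction

variable {𝒢} {g h : Γ} {x y : R}

lemma IsHomogeneous.twist_apply (hx : 𝒢.IsHomogeneous g x) (χ : Γ →* ℂˣ) (σ : R →+* ℂ) :
    𝒢.twist χ σ x = σ x * χ g := by
  rw [twist, RingHom.comp_apply, hx, liftNCRingHom_single]
  rfl

variable (𝒢) in
lemma twist_twist_inv (χ : Γ →* ℂˣ) (σ : R →+* ℂ) : 𝒢.twist χ (𝒢.twist χ⁻¹ σ) = σ := by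
  ext x
  induction x using 𝒢.homogeneous_induction with
  | hom g x hx =>
    rw [hx.twist_apply, hx.twist_apply, MonoidHom.inv_apply, Units.inv_mul_cancel_right]
  | add x y hx hy => rw [map_add, map_add, hx, hy]

variable [Module.Finite ℤ R] [Finite Γ]

lemma IsHomogeneous.inner_eq_zero (hx : 𝒢.IsHomogeneous g x) (hy : 𝒢.IsHomogeneous h y)
    (hgh : g ≠ h) : inner ℂ (complexEmbedding x) (complexEmbedding y) = 0 := by
  have : HasEnoughRootsOfUnity ℂ (Monoid.exponent Γ) := inferInstance
  obtain ⟨χ, hχ⟩ := CommGroup.exists_apply_ne_one_of_hasEnoughRootsOfUnity Γ ℂ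
    (a := g⁻¹ * h) fun h1 ↦ hgh (inv_mul_eq_one.1 h1)
  have hbij : Function.Bijective (𝒢.twist χ) := Finite.surjective_iff_bijective.1 fun σ ↦
    ⟨_, 𝒢.twist_twist_inv χ σ⟩
  have hconj : conj (χ g : ℂ) = χ g⁻¹ := by
    have hpow : (χ g : ℂ) ^ Nat.card Γ = 1 := by
      rw [← Units.val_pow_eq_pow_val, ← map_pow, pow_card_eq_one', map_one, Units.val_one]
    rw [map_inv, Units.val_inv_eq_inv_val,
      Complex.inv_eq_conj (Complex.norm_eq_one_of_pow_eq_one hpow Nat.card_pos.ne')]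
  have hinv : inner ℂ (complexEmbedding x) (complexEmbedding y) =
      χ (g⁻¹ * h) * inner ℂ (complexEmbedding x) (complexEmbedding y) := by
    rw [inner_complexEmbedding, Finset.mul_sum]
    nth_rw 1 [← hbij.sum_comp]
    refine Finset.sum_congr rfl fun σ _ ↦ ?_
    rw [hx.twist_apply, hy.twist_apply, map_mul, hconj, map_mul, Units.val_mul]
    ring
  by_contra h0
  exact hχ (Units.ext ((mul_eq_right₀ h0).1 hinv.symm))

lemma inner_component_sub_component (𝒢 : GroupGrading Γ R) (g : Γ) (x : R) :
    inner ℂ (complexEmbedding (𝒢.component g x)) (complexEmbedding (x - 𝒢.component g x)) = 0 := by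
  classical
  have := Fintype.ofFinite Γ
  nth_rw 2 [← 𝒢.sum_component x]
  rw [← Finset.sum_erase_eq_sub (Finset.mem_univ g), map_sum, inner_sum]
  exact Finset.sum_eq_zero fun h hh ↦ (𝒢.isHomogeneous_component g x).inner_eq_zero
    (𝒢.isHomogeneous_component h x) (Finset.ne_of_mem_erase hh).symm

variable [IsReduced R] [Module.IsTorsionFree ℤ R]

lemma component_component_comm {Γ' : Type*} [CommGroup Γ'] [Finite Γ'] (𝒢 : GroupGrading Γ R)
    (ℋ : GroupGrading Γ' R) (g : Γ) (h : Γ') (x : R) :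
    𝒢.component g (ℋ.component h x) = ℋ.component h (𝒢.component g x) :=
  projections_commute_of_inner_eq_zero complexEmbedding_injective
    finite_setOf_norm_complexEmbedding_lt (𝒢.inner_component_sub_component g)
    (ℋ.inner_component_sub_component h) x

lemma component_mul_sub_component_eq_zero (𝒢 : GroupGrading Γ R) (g : Γ)
    (hx : ∀ σ : R →+* ℂ, σ x = 0 ∨ ‖σ x‖ = 1) :
    𝒢.component g x * (x - 𝒢.component g x) = 0 :=
  mul_eq_zero_of_inner_complexEmbedding_eq_zero (𝒢.inner_component_sub_component g x)
    (by simpa only [add_sub_cancel] using hx)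

lemma isHomogeneous_one_of_isIdempotentElem (𝒢 : GroupGrading Γ R) (hx : IsIdempotentElem x) :
    𝒢.IsHomogeneous 1 x := by
  classical
  have hcomp {g : Γ} (hg : g ≠ 1) : 𝒢.component g x = 0 := by
    set y := 𝒢.component g x
    have hy : 𝒢.IsHomogeneous g y := 𝒢.isHomogeneous_component g x
    have horth : y * (x - y) = 0 := 𝒢.component_mul_sub_component_eq_zero g fun σ ↦
      (IsIdempotentElem.iff_eq_zero_or_one.1 (hx.map σ)).imp_right fun h ↦ by rw [h, norm_one]
    have hyx : y - y * x = 0 := eq_zero_of_pow_eq_zero (n := 2) <| by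
      linear_combination (x - 1) * horth + (y ^ 2 - y) * hx.eq
    have hyy : y * y = y := by linear_combination -horth - hyx
    by_contra hy0
    exact hg (mul_eq_right.1 ((hyy ▸ hy.mul hy :).degree_unique hy hy0))
  have := Fintype.ofFinite Γ
  have hsum := 𝒢.sum_component x
  rw [Finset.sum_eq_single_of_mem 1 (Finset.mem_univ _) fun g _ hg ↦ hcomp hg] at hsum
  exact isHomogeneous_iff_component_eq.2 hsum

lemma exists_isHomogeneous_of_pow_eq_one (𝒢 : GroupGrading Γ R) (hR : IsConnectedRing R)
    {n : ℕ} (hn : n ≠ 0) (hx : x ^ n = 1) : ∃ g, 𝒢.IsHomogeneous g x := by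
  classical
  have := hR.1
  have := Fintype.ofFinite Γ
  obtain ⟨v, hv⟩ : ∃ v, x * v = 1 := ⟨x ^ (n - 1), by rw [mul_pow_sub_one hn, hx]⟩
  obtain ⟨g, -, hg⟩ : ∃ g ∈ Finset.univ, 𝒢.component g x ≠ 0 :=
    Finset.exists_ne_zero_of_sum_ne_zero
      ((𝒢.sum_component x).trans_ne (left_ne_zero_of_mul_eq_one hv))
  set y := 𝒢.component g x with hy
  have horth : y * (x - y) = 0 := 𝒢.component_mul_sub_component_eq_zero g fun σ ↦
    .inr (Complex.norm_eq_one_of_pow_eq_one (by rw [← map_pow, hx, map_one]) hn)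
  have hidem : IsIdempotentElem (y * v) := by
    rw [IsIdempotentElem]
    linear_combination y * v * hv - v ^ 2 * horth
  refine ⟨g, isHomogeneous_iff_component_eq.2 ?_⟩
  rcases hR.2 _ hidem with h | h
  · exact (hg (by linear_combination x * h - y * hv)).elim
  · rw [← hy]
    linear_combination x * h - y * hv

lemma exists_degreeHom {G : Type*} [Group G] [Finite G] (𝒢 : GroupGrading Γ R)
    (hR : IsConnectedRing R) (w : G →* R) : ∃ α : G →* Γ, ∀ g, 𝒢.IsHomogeneous (α g) (w g) := by
  have hw (g : G) : ∃ a, 𝒢.IsHomogeneous a (w g) :=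
    𝒢.exists_isHomogeneous_of_pow_eq_one hR Nat.card_pos.ne'
      (by rw [← map_pow, pow_card_eq_one', map_one])
  choose α hα using hw
  have := hR.1
  refine ⟨.mk' α fun a b ↦ ?_, hα⟩
  have hab := (hα a).mul (hα b)
  rw [← map_mul] at hab
  exact (hα _).degree_unique hab ((Group.isUnit _).map w).ne_zero

end Orthogonality

section HomogeneousSpan

variable {Γ Γ' S S' : Type*} [CommGroup Γ] [CommGroup Γ'] [CommRing S] [CommRing S']
  {𝒢 : GroupGrading Γ S} {𝒢' : GroupGrading Γ' S'} {X : Set Γ} {X' : Set Γ'} {g : Γ} {x y : S}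

variable (𝒢) in
/-- The sum of the homogeneous components whose degrees belong to `X`. -/
def homogeneousSpan (X : Set Γ) : AddSubmonoid S :=
  .closure {x | ∃ g ∈ X, 𝒢.IsHomogeneous g x}

lemma IsHomogeneous.mem_homogeneousSpan (hx : 𝒢.IsHomogeneous g x) (hg : g ∈ X) :
    x ∈ 𝒢.homogeneousSpan X :=
  AddSubmonoid.subset_closure ⟨g, hg, hx⟩

lemma component_eq_zero_of_mem_homogeneousSpan (hx : x ∈ 𝒢.homogeneousSpan X) (hg : g ∉ X) :
    𝒢.component g x = 0 := by
  classical
  induction hx using AddSubmonoid.closure_induction with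
  | mem x hx =>
    obtain ⟨h, hh, hx⟩ := hx
    rw [hx.component_eq, if_neg (ne_of_mem_of_not_mem hh hg).symm]
  | zero => exact map_zero _
  | add x y _ _ hx hy => rw [map_add, hx, hy, add_zero]

lemma ext_component (h : ∀ g, 𝒢.component g x = 𝒢.component g y) : x = y := by
  rw [← 𝒢.sum_coeff_coaction x, ← 𝒢.sum_coeff_coaction y,
    MonoidAlgebra.ext (x := 𝒢.coaction x) (y := 𝒢.coaction y) (Finsupp.ext h)]

lemma isHomogeneous_coarsen_iff {π : Γ →* Γ'} {k : Γ'} :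
    (𝒢.coarsen π).IsHomogeneous k x ↔ x ∈ 𝒢.homogeneousSpan (π ⁻¹' {k}) := by
  classical
  refine ⟨fun hx ↦ ?_, fun hx ↦ ?_⟩
  · rw [← hx.component_self]
    clear hx
    induction x using 𝒢.homogeneous_induction with
    | hom g x hx =>
      rw [(hx.coarsen π).component_eq]
      split_ifs with hgk
      exacts [hx.mem_homogeneousSpan hgk.symm, zero_mem _]
    | add x y hx hy => rw [map_add]; exact add_mem hx hy
  · induction hx using AddSubmonoid.closure_induction with
    | mem x hx =>
      obtain ⟨g, rfl, hx⟩ := hx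
      exact hx.coarsen π
    | zero => exact isHomogeneous_zero
    | add x y _ _ hx hy => exact hx.add hy

lemma bijOn_homogeneousSpan {f : S →+* S'} {δ : Γ → Γ'} (hδ : Set.BijOn δ X X')
    (hf : ∀ g ∈ X, Set.BijOn f {x | 𝒢.IsHomogeneous g x} {y | 𝒢'.IsHomogeneous (δ g) y}) :
    Set.BijOn f (𝒢.homogeneousSpan X) (𝒢'.homogeneousSpan X') := by
  have hcomp {g : Γ} (hg : g ∈ X) {x : S} (hx : x ∈ 𝒢.homogeneousSpan X) :
      𝒢'.component (δ g) (f x) = f (𝒢.component g x) := by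
    classical
    induction hx using AddSubmonoid.closure_induction with
    | mem x hx =>
      obtain ⟨h, hh, hx⟩ := hx
      rw [hx.component_eq, IsHomogeneous.component_eq ((hf h hh).mapsTo hx), apply_ite f, map_zero]
      exact if_congr (hδ.injOn.eq_iff hg hh) rfl rfl
    | zero => simp only [map_zero]
    | add x y _ _ hx hy => simp only [map_add, hx, hy]
  refine ⟨fun x hx ↦ ?_, fun x hx y hy hxy ↦ ext_component (𝒢 := 𝒢) fun g ↦ ?_, fun y hy ↦ ?_⟩
  · induction hx using AddSubmonoid.closure_induction with
    | mem x hx =>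
      obtain ⟨g, hg, hx⟩ := hx
      exact IsHomogeneous.mem_homogeneousSpan ((hf g hg).mapsTo hx) (hδ.mapsTo hg)
    | zero => rw [map_zero]; exact zero_mem _
    | add x y _ _ hx hy => rw [map_add]; exact add_mem hx hy
  · by_cases hg : g ∈ X
    · exact (hf g hg).injOn (𝒢.isHomogeneous_component g x) (𝒢.isHomogeneous_component g y)
        (by rw [← hcomp hg hx, ← hcomp hg hy, hxy])
    · rw [component_eq_zero_of_mem_homogeneousSpan hx hg,
        component_eq_zero_of_mem_homogeneousSpan hy hg]
  · induction hy using AddSubmonoid.closure_induction with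
    | mem y hy =>
      obtain ⟨_, hg', hy⟩ := hy
      obtain ⟨g, hg, rfl⟩ := hδ.surjOn hg'
      obtain ⟨x, hx, rfl⟩ := (hf g hg).surjOn hy
      exact ⟨x, IsHomogeneous.mem_homogeneousSpan hx hg, rfl⟩
    | zero => exact ⟨0, zero_mem _, map_zero f⟩
    | add x y _ _ hx hy =>
      obtain ⟨x, hx, rfl⟩ := hx
      obtain ⟨y, hy, rfl⟩ := hy
      exact ⟨x + y, add_mem hx hy, map_add f x y⟩

end HomogeneousSpan

end GroupGrading

section GroupRing

variable {R A G : Type*} [CommRing R] [CommRing A] [CommGroup G] (ψ : R ≃+* MonoidAlgebra A G)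

/-- The inclusion of the coefficient ring into a ring identified with a group ring. -/
noncomputable def coeffHom : A →+* R := (ψ.symm : MonoidAlgebra A G →+* R).comp singleOneRingHom

/-- The inclusion of the group into a ring identified with a group ring. -/
noncomputable def unitHom : G →* R := (ψ.symm : MonoidAlgebra A G →* R).comp (of A G)

/-- The augmentation of a ring identified with a group ring. -/
noncomputable def augmentation : R →+* A :=
  (liftNCRingHom (.id A) (1 : G →* A) fun _ _ ↦ .all _ _).comp (ψ : R →+* MonoidAlgebra A G)

variable {ψ}

lemma apply_coeffHom (a : A) : ψ (coeffHom ψ a) = single 1 a :=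
  ψ.apply_symm_apply _

lemma apply_unitHom (g : G) : ψ (unitHom ψ g) = single g 1 :=
  ψ.apply_symm_apply _

lemma augmentation_coeffHom (a : A) : augmentation ψ (coeffHom ψ a) = a := by
  simp [augmentation, apply_coeffHom]

lemma augmentation_unitHom (g : G) : augmentation ψ (unitHom ψ g) = 1 := by
  simp [augmentation, apply_unitHom]

lemma unitHom_mul_inv (g : G) : unitHom ψ g * unitHom ψ g⁻¹ = 1 := by
  rw [← map_mul, mul_inv_cancel, map_one]

lemma coeffHom_mul_unitHom (a : A) (g : G) :
    coeffHom ψ a * unitHom ψ g = ψ.symm (single g a) := by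
  change ψ.symm (single 1 a) * ψ.symm (single g 1) = _
  rw [← map_mul, single_mul_single, one_mul, mul_one]

lemma coeffHom_mul_unitHom_induction {p : R → Prop} (hom : ∀ a g, p (coeffHom ψ a * unitHom ψ g))
    (add : ∀ x y, p x → p y → p (x + y)) (x : R) : p x := by
  obtain ⟨f, rfl⟩ := ψ.symm.surjective x
  induction f using MonoidAlgebra.induction_linear with
  | zero => simpa only [map_zero, zero_mul] using hom 0 1
  | add f f' hf hf' => rw [map_add]; exact add _ _ hf hf'
  | single g a => exact coeffHom_mul_unitHom (ψ := ψ) a g ▸ hom a g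

variable (ψ) in
/-- The coaction of `Stark.grading`, which puts `a * g` in degree `g`. -/
noncomputable def groupCoaction : R →+* MonoidAlgebra R G :=
  (liftNCRingHom (singleOneRingHom.comp (coeffHom ψ))
    { toFun := fun g ↦ single g (unitHom ψ g)
      map_one' := by rw [map_one, one_def]
      map_mul' := fun g h ↦ by rw [map_mul, single_mul_single] }
    fun _ _ ↦ .all _ _).comp (ψ : R →+* MonoidAlgebra A G)

lemma groupCoaction_coeffHom_mul_unitHom (a : A) (g : G) :
    groupCoaction ψ (coeffHom ψ a * unitHom ψ g) = single g (coeffHom ψ a * unitHom ψ g) := by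
  rw [groupCoaction, coeffHom_mul_unitHom, RingHom.comp_apply, RingHom.coe_coe,
    RingEquiv.apply_symm_apply, liftNCRingHom_single, ← coeffHom_mul_unitHom]
  exact (single_mul_single ..).trans (by rw [one_mul])

variable (ψ) in
/-- The grading of a ring identified with a group ring by its group. -/
noncomputable def grading : GroupGrading G R where
  coaction := groupCoaction ψ
  closure_homogeneous := by
    refine eq_top_iff.2 fun x hx ↦ ?_
    clear hx
    induction x using coeffHom_mul_unitHom_induction (ψ := ψ) with
    | hom a g => exact AddSubmonoid.subset_closure ⟨g, groupCoaction_coeffHom_mul_unitHom a g⟩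
    | add x y hx hy => exact add_mem hx hy

lemma isHomogeneous_coeffHom_mul_unitHom (a : A) (g : G) :
    (grading ψ).IsHomogeneous g (coeffHom ψ a * unitHom ψ g) :=
  groupCoaction_coeffHom_mul_unitHom a g

lemma isHomogeneous_coeffHom (a : A) : (grading ψ).IsHomogeneous 1 (coeffHom ψ a) := by
  simpa only [map_one, mul_one] using isHomogeneous_coeffHom_mul_unitHom (ψ := ψ) a 1

lemma isHomogeneous_unitHom (g : G) : (grading ψ).IsHomogeneous g (unitHom ψ g) := by
  simpa only [map_one, one_mul] using isHomogeneous_coeffHom_mul_unitHom (ψ := ψ) 1 g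

lemma coeffHom_augmentation {g : G} {x : R} (hx : (grading ψ).IsHomogeneous g x) :
    coeffHom ψ (augmentation ψ x) = x * unitHom ψ g⁻¹ := by
  classical
  rw [← hx.component_self]
  clear hx
  induction x using coeffHom_mul_unitHom_induction (ψ := ψ) with
  | hom a h =>
    rw [(isHomogeneous_coeffHom_mul_unitHom a h).component_eq]
    split_ifs with hgh
    · rw [map_mul, augmentation_coeffHom, augmentation_unitHom, hgh, mul_one, mul_assoc,
        unitHom_mul_inv, mul_one]
    · simp only [map_zero, zero_mul]
  | add x y hx hy => rw [map_add, map_add, map_add, add_mul, hx, hy]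

lemma coeffHom_augmentation_of_isHomogeneous_one {x : R} (hx : (grading ψ).IsHomogeneous 1 x) :
    coeffHom ψ (augmentation ψ x) = x := by
  rw [coeffHom_augmentation hx, inv_one, map_one, mul_one]

end GroupRing

/-! ### Comparison of two group ring structures on a connected order -/

section Fitting

lemma exists_ne_zero_isIdempotentElem_pow {M : Type*} [Monoid M] [Finite M] (x : M) :
    ∃ n ≠ 0, IsIdempotentElem (x ^ n) := by
  let : TopologicalSpace M := ⊥
  have : DiscreteTopology M := ⟨rfl⟩
  obtain ⟨_, ⟨n, hn, rfl⟩, hidem⟩ := exists_idempotent_in_compact_subsemigroup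
    (fun _ ↦ continuous_of_discreteTopology) {y : M | ∃ n ≠ 0, x ^ n = y}
    ⟨x, 1, one_ne_zero, pow_one x⟩ (Set.toFinite _).isCompact
    fun y ⟨m, _, hy⟩ z ⟨n, hn, hz⟩ ↦ ⟨m + n, by omega, by rw [pow_add, hy, hz]⟩
  exact ⟨n, hn, hidem⟩

variable {G H : Type*} [CommGroup G] [CommGroup H]

lemma nonempty_ker_prod_range_mulEquiv {e : H →* H} (he : ∀ h, e (e h) = e h) :
    Nonempty (e.ker × e.range ≃* H) := by
  refine ⟨.ofBijective (e.ker.subtype.coprod e.range.subtype) ⟨?_, fun h ↦ ?_⟩⟩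
  · refine (injective_iff_map_eq_one _).2 ?_
    rintro ⟨⟨k, hk⟩, _, h, rfl⟩ hkh
    have hkh : k * e h = 1 := hkh
    have hh : e h = 1 := by
      simpa only [map_mul, MonoidHom.mem_ker.1 hk, he, one_mul, map_one] using congrArg e hkh
    rw [hh, mul_one] at hkh
    exact Prod.ext (Subtype.ext hkh) (Subtype.ext hh)
  · refine ⟨(⟨h / e h, ?_⟩, ⟨e h, h, rfl⟩), div_mul_cancel h (e h)⟩
    rw [MonoidHom.mem_ker, map_div, he, div_self']

/-- The endomorphism `h ↦ h / α (β h)`, which measures how far `α` is from being a left inverse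
of `β`. -/
def defect (α : G →* H) (β : H →* G) : Monoid.End H := MonoidHom.id H / α.comp β

/-- The `n`-th iterate of the defect. -/
def iterDefect (α : G →* H) (β : H →* G) (n : ℕ) : H →* H := (defect α β ^ n : Monoid.End H)

variable (α : G →* H) (β : H →* G) (n : ℕ)

lemma iterDefect_apply (h : H) : iterDefect α β n h = (fun x ↦ x / α (β x))^[n] h :=
  congrFun (Monoid.End.coe_pow _ (defect α β) n) h

lemma map_iterDefect_apply (h : H) : β (iterDefect α β n h) = iterDefect β α n (β h) := by
  have hβ : Function.Semiconj β (fun x ↦ x / α (β x)) fun y ↦ y / β (α y) :=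
    fun x ↦ map_div β x _
  rw [iterDefect_apply, iterDefect_apply, hβ.iterate_right n]

lemma injOn_ker_iterDefect : Set.InjOn β (iterDefect α β n).ker := by
  intro x hx y hy hxy
  have hβ : β (x / y) = 1 := by rw [map_div, hxy, div_self']
  have hfix : Function.IsFixedPt (fun x ↦ x / α (β x)) (x / y) := by
    rw [Function.IsFixedPt, hβ, map_one, div_one]
  rw [← div_eq_one, ← hfix.iterate n, ← iterDefect_apply]
  exact div_mem hx hy

lemma mapsTo_ker_iterDefect :
    Set.MapsTo β (iterDefect α β n).ker (iterDefect β α n).ker := by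
  intro h hh
  rw [SetLike.mem_coe, MonoidHom.mem_ker, ← map_iterDefect_apply, MonoidHom.mem_ker.1 hh, map_one]

variable [Finite G] [Finite H]

lemma bijOn_ker_iterDefect : Set.BijOn β (iterDefect α β n).ker (iterDefect β α n).ker :=
  ⟨mapsTo_ker_iterDefect α β n, injOn_ker_iterDefect α β n,
    (Set.eq_of_subset_of_ncard_le (mapsTo_ker_iterDefect α β n).image_subset <| by
      rw [(injOn_ker_iterDefect α β n).ncard_image]
      exact Set.ncard_le_ncard_of_injOn α (mapsTo_ker_iterDefect β α n)
        (injOn_ker_iterDefect β α n)).ge⟩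

lemma exists_ne_zero_iterDefect_idempotent : ∃ n ≠ 0,
    (∀ h, iterDefect α β n (iterDefect α β n h) = iterDefect α β n h) ∧
      ∀ g, iterDefect β α n (iterDefect β α n g) = iterDefect β α n g := by
  have : Finite (Monoid.End G) := DFunLike.finite _
  have : Finite (Monoid.End H) := DFunLike.finite _
  obtain ⟨n, hn, hidem⟩ := exists_ne_zero_isIdempotentElem_pow (defect α β, defect β α)
  exact ⟨n, hn, DFunLike.congr_fun (congrArg Prod.fst hidem.eq),
    DFunLike.congr_fun (congrArg Prod.snd hidem.eq)⟩

end Fitting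

section Coefficients

variable {R A B G H Γ : Type*} [CommRing R] [CommRing A] [CommRing B] [CommGroup G] [CommGroup H]
  [CommGroup Γ] [Finite G] [Finite H] [Finite Γ] [Module.Finite ℤ R] [IsReduced R]
  [Module.IsTorsionFree ℤ R] {ψ : R ≃+* MonoidAlgebra A G} {φ : R ≃+* MonoidAlgebra B H}
  {α : G →* H} {β : H →* G}

variable (ψ) in
/-- The grading of the coefficient ring `A` of a group ring induced by a grading of the
group ring. -/
noncomputable def coeffGrading (𝒢 : GroupGrading Γ R) : GroupGrading Γ A :=
  𝒢.restrict (coeffHom ψ) (augmentation ψ) augmentation_coeffHom fun g a ↦ by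
    rw [← (isHomogeneous_coeffHom a).component_self, 𝒢.component_component_comm]
    exact ⟨_, coeffHom_augmentation_of_isHomogeneous_one
      ((grading ψ).isHomogeneous_component 1 _)⟩

lemma isHomogeneous_coeffGrading_iff {𝒢 : GroupGrading Γ R} {g : Γ} {a : A} :
    (coeffGrading ψ 𝒢).IsHomogeneous g a ↔ 𝒢.IsHomogeneous g (coeffHom ψ a) :=
  GroupGrading.isHomogeneous_restrict_iff

lemma isHomogeneous_augmentation_unitHom
    (hα : ∀ g, (grading φ).IsHomogeneous (α g) (unitHom ψ g))
    (hβ : ∀ h, (grading ψ).IsHomogeneous (β h) (unitHom φ h)) (h : H) :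
    (coeffGrading ψ (grading φ)).IsHomogeneous (h / α (β h)) (augmentation ψ (unitHom φ h)) := by
  rw [isHomogeneous_coeffGrading_iff, coeffHom_augmentation (hβ h), div_eq_mul_inv, ← map_inv]
  exact (isHomogeneous_unitHom h).mul (hα _)

lemma nonempty_ringEquiv_monoidAlgebra_range
    (hα : ∀ g, (grading φ).IsHomogeneous (α g) (unitHom ψ g))
    (hβ : ∀ h, (grading ψ).IsHomogeneous (β h) (unitHom φ h)) {n : ℕ} (hn : n ≠ 0)
    (hidem : ∀ h, iterDefect α β n (iterDefect α β n h) = iterDefect α β n h) :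
    Nonempty (A ≃+* MonoidAlgebra
      ((coeffGrading ψ (grading φ)).coarsen (iterDefect α β n).rangeRestrict).degreeOne
      (iterDefect α β n).range) := by
  obtain ⟨n, rfl⟩ := Nat.exists_eq_succ_of_ne_zero hn
  let w : (iterDefect α β n.succ).range →* A := (augmentation ψ : R →* A).comp
    ((unitHom φ).comp ((iterDefect α β n).comp (Subgroup.subtype _)))
  refine ⟨(GroupGrading.monoidAlgebraDegreeOneEquiv (w := w) ?_).symm⟩
  rintro ⟨_, h, rfl⟩
  have hdeg := (isHomogeneous_augmentation_unitHom hα hβ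
    (iterDefect α β n (iterDefect α β n.succ h))).coarsen (iterDefect α β n.succ).rangeRestrict
  convert! hdeg using 1
  refine Subtype.ext ?_
  rw [MonoidHom.coe_rangeRestrict, iterDefect_apply α β n,
    ← Function.iterate_succ_apply' fun x ↦ x / α (β x), ← iterDefect_apply, hidem, hidem]

lemma bijOn_augmentation_comp_coeffHom
    (hβ : ∀ h, (grading ψ).IsHomogeneous (β h) (unitHom φ h)) (h : H) :
    Set.BijOn ((augmentation φ).comp (coeffHom ψ))
      {a | (coeffGrading ψ (grading φ)).IsHomogeneous h a}
      {b | (coeffGrading φ (grading ψ)).IsHomogeneous (β h)⁻¹ b} := by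
  simp only [isHomogeneous_coeffGrading_iff]
  refine ⟨fun a ha ↦ ?_, fun a ha a' ha' haa' ↦ ?_, fun b hb ↦ ?_⟩
  · rw [Set.mem_ofPred_eq, RingHom.comp_apply, coeffHom_augmentation ha, ← one_mul (β h)⁻¹,
      ← map_inv]
    exact (isHomogeneous_coeffHom a).mul (hβ _)
  · have hmul : coeffHom ψ a * unitHom φ h⁻¹ = coeffHom ψ a' * unitHom φ h⁻¹ := by
      rw [← coeffHom_augmentation ha, ← coeffHom_augmentation ha']
      exact congrArg _ haa'
    rw [← augmentation_coeffHom (ψ := ψ) a, ← augmentation_coeffHom (ψ := ψ) a',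
      ((Group.isUnit h⁻¹).map (unitHom φ)).mul_left_injective hmul]
  · have hdeg : (grading ψ).IsHomogeneous 1 (coeffHom φ b * unitHom φ h) :=
      inv_mul_cancel (β h) ▸ hb.mul (hβ h)
    have hcoeff := coeffHom_augmentation_of_isHomogeneous_one hdeg
    refine ⟨augmentation ψ (coeffHom φ b * unitHom φ h), ?_, ?_⟩
    · rw [Set.mem_ofPred_eq, hcoeff]
      exact isHomogeneous_coeffHom_mul_unitHom b h
    · rw [RingHom.comp_apply, hcoeff, map_mul, augmentation_coeffHom, augmentation_unitHom,
        mul_one]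

lemma nonempty_degreeOne_ringEquiv
    (hβ : ∀ h, (grading ψ).IsHomogeneous (β h) (unitHom φ h)) (α : G →* H) (n : ℕ) :
    Nonempty (((coeffGrading ψ (grading φ)).coarsen (iterDefect α β n).rangeRestrict).degreeOne ≃+*
      ((coeffGrading φ (grading ψ)).coarsen (iterDefect β α n).rangeRestrict).degreeOne) := by
  have hδ : Set.BijOn (fun h ↦ (β h)⁻¹) (iterDefect α β n).rangeRestrict.ker
      (iterDefect β α n).rangeRestrict.ker := by
    rw [MonoidHom.ker_rangeRestrict, MonoidHom.ker_rangeRestrict]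
    exact Set.BijOn.comp
      ⟨fun _ ↦ inv_mem, inv_injective.injOn, fun x hx ↦ ⟨x⁻¹, inv_mem hx, inv_inv x⟩⟩
      (bijOn_ker_iterDefect α β n)
  have hbij := GroupGrading.bijOn_homogeneousSpan hδ fun h _ ↦ bijOn_augmentation_comp_coeffHom hβ h
  have hbij' : Set.BijOn ((augmentation φ).comp (coeffHom ψ))
      ((coeffGrading ψ (grading φ)).coarsen (iterDefect α β n).rangeRestrict).degreeOne
      ((coeffGrading φ (grading ψ)).coarsen (iterDefect β α n).rangeRestrict).degreeOne := by
    convert hbij using 1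
    all_goals exact Set.ext fun _ ↦ GroupGrading.isHomogeneous_coarsen_iff
  exact ⟨.ofBijective (((augmentation φ).comp (coeffHom ψ)).restrict _ _ hbij'.mapsTo)
    hbij'.bijective⟩

theorem IsConnectedRing.exists_common_coefficients (hR : IsConnectedRing R)
    (ψ : R ≃+* MonoidAlgebra A G) (φ : R ≃+* MonoidAlgebra B H) :
    ∃ (C : Subring A) (I K : Subgroup H) (L : Subgroup G), Nonempty (A ≃+* MonoidAlgebra C K) ∧
      Nonempty (B ≃+* MonoidAlgebra C L) ∧ Nonempty (I × K ≃* H) ∧ Nonempty (I × L ≃* G) := by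
  obtain ⟨α, hα⟩ := (grading φ).exists_degreeHom hR (unitHom ψ)
  obtain ⟨β, hβ⟩ := (grading ψ).exists_degreeHom hR (unitHom φ)
  obtain ⟨n, hn, he, he'⟩ := exists_ne_zero_iterDefect_idempotent α β
  obtain ⟨ρ⟩ := nonempty_degreeOne_ringEquiv hβ α n
  obtain ⟨ε⟩ := nonempty_ringEquiv_monoidAlgebra_range hβ hα hn he'
  obtain ⟨κ⟩ := nonempty_ker_prod_range_mulEquiv he'
  have hker := bijOn_ker_iterDefect α β n
  let ι : (iterDefect α β n).ker ≃* (iterDefect β α n).ker :=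
    .ofBijective ((β.comp (Subgroup.subtype _)).codRestrict _ fun x ↦ hker.mapsTo x.2)
      hker.bijective
  exact ⟨_, _, _, _, nonempty_ringEquiv_monoidAlgebra_range hα hβ hn he,
    ⟨ε.trans (mapRingEquiv _ ρ.symm)⟩, nonempty_ker_prod_range_mulEquiv he,
    ⟨(ι.prodCongr (.refl _)).trans κ⟩⟩

end Coefficients

/-! ### Finite abelian groups -/

section FiniteAbelianGroups

/-- The number of solutions of `x ^ k = 1`. -/
noncomputable def torsionCard (G : Type*) [CommGroup G] (k : ℕ) : ℕ :=
  Nat.card {x : G // x ^ k = 1}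

/-- The cyclic group of order `p ^ (e + 1)`, where `q = (p, e)`. -/
abbrev PrimePowerCyclic (q : Nat.Primes × ℕ) : Type :=
  Multiplicative (ZMod (q.1 ^ (q.2 + 1)))

/-- The number of factors of order `p ^ (e + 1)`, where `q = (p, e)`, in a decomposition of the
finite abelian group `G` into cyclic groups of prime power order. A cyclic factor of order `p ^ k`
contributes `min k m` to the `p`-adic valuation of `torsionCard G (p ^ m)`, hence the number of
factors in question is minus the second difference of this valuation at `m = e + 1`. -/
noncomputable def cyclicMultiplicity (G : Type*) [CommGroup G] (q : Nat.Primes × ℕ) : ℤ :=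
  2 * ((torsionCard G (q.1 ^ (q.2 + 1))).factorization q.1 : ℤ)
    - (torsionCard G (q.1 ^ q.2)).factorization q.1
    - (torsionCard G (q.1 ^ (q.2 + 2))).factorization q.1

section Basic

variable {G H ι : Type*} [CommGroup G] [CommGroup H] [Fintype ι] {M : ι → Type*}
  [∀ i, CommGroup (M i)]

lemma torsionCard_congr (e : G ≃* H) (k : ℕ) : torsionCard G k = torsionCard H k :=
  Nat.card_congr <| e.toEquiv.subtypeEquiv fun x ↦ by
    rw [MulEquiv.toEquiv_eq_coe, MulEquiv.coe_toEquiv, ← map_pow, EmbeddingLike.map_eq_one_iff]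

lemma torsionCard_ne_zero [Finite G] (k : ℕ) : torsionCard G k ≠ 0 :=
  have : Nonempty {x : G // x ^ k = 1} := ⟨⟨1, one_pow k⟩⟩
  Nat.card_pos.ne'

lemma torsionCard_prod (k : ℕ) : torsionCard (G × H) k = torsionCard G k * torsionCard H k := by
  rw [torsionCard, torsionCard, torsionCard, ← Nat.card_prod]
  refine Nat.card_congr (.trans (Equiv.subtypeEquivRight fun x ↦ ?_) Equiv.subtypeProdEquivProd)
  simp only [Prod.ext_iff, Prod.pow_fst, Prod.pow_snd, Prod.fst_one, Prod.snd_one]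

lemma torsionCard_pi (k : ℕ) : torsionCard (∀ i, M i) k = ∏ i, torsionCard (M i) k := by
  simp only [torsionCard]
  rw [← Nat.card_pi]
  refine Nat.card_congr (.trans (Equiv.subtypeEquivRight fun x ↦ ?_) Equiv.subtypePiEquivPi)
  simp only [funext_iff, Pi.pow_apply, Pi.one_apply]

lemma cyclicMultiplicity_congr (e : G ≃* H) (q : Nat.Primes × ℕ) :
    cyclicMultiplicity G q = cyclicMultiplicity H q := by
  simp only [cyclicMultiplicity, torsionCard_congr e]

lemma cyclicMultiplicity_prod [Finite G] [Finite H] (q : Nat.Primes × ℕ) :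
    cyclicMultiplicity (G × H) q = cyclicMultiplicity G q + cyclicMultiplicity H q := by
  simp only [cyclicMultiplicity, torsionCard_prod,
    Nat.factorization_mul (torsionCard_ne_zero _) (torsionCard_ne_zero _), Finsupp.add_apply]
  push_cast
  ring

lemma cyclicMultiplicity_pi [∀ i, Finite (M i)] (q : Nat.Primes × ℕ) :
    cyclicMultiplicity (∀ i, M i) q = ∑ i, cyclicMultiplicity (M i) q := by
  simp only [cyclicMultiplicity, torsionCard_pi,
    Nat.factorization_prod (fun _ _ ↦ torsionCard_ne_zero _), Finsupp.finsetSum_apply]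
  push_cast
  rw [Finset.sum_sub_distrib, Finset.sum_sub_distrib, Finset.mul_sum]

end Basic

instance (q : Nat.Primes × ℕ) : NeZero ((q.1 : ℕ) ^ (q.2 + 1)) :=
  ⟨pow_ne_zero _ q.1.2.ne_zero⟩

instance (q : Nat.Primes × ℕ) : Finite (PrimePowerCyclic q) :=
  inferInstanceAs (Finite (ZMod (q.1 ^ (q.2 + 1))))

instance (q : Nat.Primes × ℕ) : Nontrivial (PrimePowerCyclic q) :=
  have : Fact (1 < (q.1 : ℕ) ^ (q.2 + 1)) := ⟨Nat.one_lt_pow q.2.succ_ne_zero q.1.2.one_lt⟩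
  inferInstanceAs (Nontrivial (ZMod (q.1 ^ (q.2 + 1))))

lemma factorization_torsionCard_primePowerCyclic (q : Nat.Primes × ℕ) (p : Nat.Primes) (k : ℕ) :
    (torsionCard (PrimePowerCyclic q) (p ^ k)).factorization p =
      if q.1 = p then min (q.2 + 1) k else 0 := by
  have hcard : torsionCard (PrimePowerCyclic q) (p ^ k) =
      ((q.1 : ℕ) ^ (q.2 + 1)).gcd (p ^ k) :=
    (IsCyclic.card_powMonoidHom_ker (G := PrimePowerCyclic q) _).trans
      (by rw [Nat.card_congr Multiplicative.toAdd, Nat.card_zmod])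
  rw [hcard, Nat.factorization_gcd (pow_ne_zero _ q.1.2.ne_zero) (pow_ne_zero _ p.2.ne_zero),
    q.1.2.factorization_pow, p.2.factorization_pow, Finsupp.inf_apply, Finsupp.single_eq_same]
  split_ifs with h
  · rw [h, Finsupp.single_eq_same]
  · rw [Finsupp.single_eq_of_ne fun h' ↦ h (Subtype.ext h'.symm), Nat.min_eq_left zero_le]

lemma cyclicMultiplicity_primePowerCyclic (q r : Nat.Primes × ℕ) :
    cyclicMultiplicity (PrimePowerCyclic q) r = if q = r then 1 else 0 := by
  simp only [cyclicMultiplicity, factorization_torsionCard_primePowerCyclic, Prod.ext_iff]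
  by_cases hp : q.1 = r.1
  · simp only [hp, if_true, true_and]
    split_ifs <;> omega
  · simp only [hp, if_false, false_and]
    rfl

lemma exists_mulEquiv_pi_primePowerCyclic (G : Type*) [CommGroup G] [Finite G] :
    ∃ (ι : Type) (_ : Fintype ι) (f : ι → Nat.Primes × ℕ),
      Nonempty (G ≃* ∀ i, PrimePowerCyclic (f i)) := by
  classical
  obtain ⟨ι, _, p, hp, e, ⟨E⟩⟩ := AddCommGroup.equiv_directSum_zmod_of_finite (Additive G)
  have hpow (i : {i // e i ≠ 0}) : p i ^ e i = p i ^ (e i - 1 + 1) := by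
    rw [Nat.sub_add_cancel (Nat.one_le_iff_ne_zero.2 i.2)]
  let D := (RingEquiv.piEquivPiSubtypeProd (e · ≠ 0) fun i ↦ ZMod (p i ^ e i)).toAddEquiv
  let (i : {i // ¬ e i ≠ 0}) : Unique (ZMod (p i ^ e i)) :=
    have := ZMod.subsingleton_iff.2 (by rw [not_not.1 i.2, pow_zero] : p i ^ e i = 1)
    Unique.mk' _
  let F : Additive G ≃+ ∀ i : {i // e i ≠ 0}, ZMod (p i ^ (e i - 1 + 1)) :=
    E.trans <| (DirectSum.addEquivProd _).trans <| D.trans <| AddEquiv.prodUnique.trans <|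
      .piCongrRight fun i ↦ (ZMod.ringEquivCongr (hpow i)).toAddEquiv
  exact ⟨{i // e i ≠ 0}, inferInstance, fun i ↦ (⟨p i, hp i⟩, e i - 1),
    ⟨MulEquiv.toAdditive.symm (F.trans (MulEquiv.piMultiplicative _).toAdditiveRight)⟩⟩

section Decomposition

variable {G H ι : Type*} [CommGroup G] [CommGroup H]

lemma cyclicMultiplicity_eq_card [Finite ι] {f : ι → Nat.Primes × ℕ}
    (E : G ≃* ∀ i, PrimePowerCyclic (f i)) (q : Nat.Primes × ℕ) :
    cyclicMultiplicity G q = Nat.card {i // f i = q} := by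
  have := Fintype.ofFinite ι
  rw [cyclicMultiplicity_congr E, cyclicMultiplicity_pi]
  simp only [cyclicMultiplicity_primePowerCyclic, Finset.sum_boole, Nat.card_eq_fintype_card,
    Fintype.card_subtype]

variable [Finite G] [Finite H]

variable (G) in
lemma cyclicMultiplicity_nonneg (q : Nat.Primes × ℕ) : 0 ≤ cyclicMultiplicity G q := by
  obtain ⟨ι, _, f, ⟨E⟩⟩ := exists_mulEquiv_pi_primePowerCyclic G
  exact (cyclicMultiplicity_eq_card E q).symm ▸ Nat.cast_nonneg _

lemma nonempty_mulEquiv_of_cyclicMultiplicity_eq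
    (h : ∀ q, cyclicMultiplicity G q = cyclicMultiplicity H q) : Nonempty (G ≃* H) := by
  obtain ⟨ι, _, f, ⟨E⟩⟩ := exists_mulEquiv_pi_primePowerCyclic G
  obtain ⟨κ, _, f', ⟨E'⟩⟩ := exists_mulEquiv_pi_primePowerCyclic H
  have hfiber (q) : Nonempty ({i // f i = q} ≃ {i // f' i = q}) := Finite.card_eq.1 <| by
    rw [← Nat.cast_inj (R := ℤ), ← cyclicMultiplicity_eq_card E, h, cyclicMultiplicity_eq_card E']
  obtain ⟨σ, hσ⟩ : ∃ σ : ι ≃ κ, ∀ i, f' (σ i) = f i :=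
    ⟨Equiv.ofFiberEquiv fun q ↦ (hfiber q).some, Equiv.ofFiberEquiv_map _⟩
  obtain rfl : f = fun i ↦ f' (σ i) := funext fun i ↦ (hσ i).symm
  let T : (∀ k, PrimePowerCyclic (f' k)) ≃* ∀ i, PrimePowerCyclic (f' (σ i)) :=
    { (Equiv.piCongrLeft (fun k ↦ PrimePowerCyclic (f' k)) σ).symm with map_mul' := fun _ _ ↦ rfl }
  exact ⟨E.trans (T.symm.trans E'.symm)⟩

lemma exists_mulEquiv_primePowerCyclic_prod {q : Nat.Primes × ℕ} (h : 0 < cyclicMultiplicity G q) :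
    ∃ (G' : Type) (_ : CommGroup G'), Nonempty (G ≃* PrimePowerCyclic q × G') := by
  classical
  obtain ⟨ι, _, f, ⟨E⟩⟩ := exists_mulEquiv_pi_primePowerCyclic G
  rw [cyclicMultiplicity_eq_card E, Nat.cast_pos] at h
  obtain ⟨⟨⟨i, rfl⟩⟩, -⟩ := Nat.card_pos_iff.1 h
  let T : (∀ j, PrimePowerCyclic (f j)) ≃*
      PrimePowerCyclic (f i) × ∀ j : {j // j ≠ i}, PrimePowerCyclic (f j) :=
    { Equiv.piSplitAt i fun j ↦ PrimePowerCyclic (f j) with map_mul' := fun _ _ ↦ rfl }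
  exact ⟨_, inferInstance, ⟨E.trans T⟩⟩

end Decomposition

end FiniteAbelianGroups

/-! ### Reduction to connected orders -/

/-- A reduced commutative ring whose additive group is free of finite rank; over `ℤ`, a finitely
generated module is free as soon as it is torsion-free. -/
class IsReducedOrder (R : Type*) [CommRing R] : Prop extends
  Module.Finite ℤ R, Module.IsTorsionFree ℤ R, IsReduced R

section Orders

variable {R S T : Type*} [CommRing R] [CommRing S] [CommRing T]

lemma IsReducedOrder.of_injective [IsReducedOrder R] (f : S →ₙ+* R)
    (hf : Function.Injective f) : IsReducedOrder S where
  toFinite := .of_injective (f : S →+ R).toIntLinearMap hf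
  toIsTorsionFree := hf.moduleIsTorsionFree f fun n x ↦ map_zsmul (f : S →+ R) n x
  eq_zero := by
    rintro x ⟨n, hn⟩
    have hpow (m : ℕ) : f x ^ (m + 1) = f (x ^ (m + 1)) := by
      induction m with
      | zero => simp only [zero_add, pow_one]
      | succ m ih => rw [pow_succ, ih, ← map_mul, ← pow_succ]
    refine (map_eq_zero_iff f hf).1 (eq_zero_of_pow_eq_zero (n := n + 1) ?_)
    rw [hpow, pow_succ, hn, zero_mul, map_zero]

lemma IsReducedOrder.fst [IsReducedOrder R] (E : R ≃+* S × T) : IsReducedOrder S :=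
  .of_injective
    { toFun x := E.symm (x, 0)
      map_mul' x y := by rw [← map_mul, Prod.mk_mul_mk, mul_zero]
      map_zero' := map_zero E.symm
      map_add' x y := by rw [← map_add, Prod.mk_add_mk, add_zero] }
    fun _ _ h ↦ congrArg Prod.fst (E.symm.injective h)

lemma finrank_fst_lt [IsReducedOrder R] [Nontrivial T] (E : R ≃+* S × T) :
    Module.finrank ℤ S < Module.finrank ℤ R := by
  have := IsReducedOrder.fst E
  have := IsReducedOrder.fst (E.trans .prodComm)
  rw [E.toAddEquiv.toIntLinearEquiv.finrank_eq, Module.finrank_prod]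
  exact lt_add_of_pos_right _ Module.finrank_pos

end Orders

section Idempotents

variable {R A G : Type*} [CommRing R] [CommRing A] [CommGroup G]

/-- The splitting of a ring by an idempotent. -/
noncomputable def quotientProdQuotientEquiv {e : R} (he : IsIdempotentElem e) :
    R ≃+* (R ⧸ Ideal.span {e}) × (R ⧸ Ideal.span {1 - e}) :=
  (AlgEquiv.prodQuotientOfIsIdempotentElem R he he.one_sub (add_sub_cancel _ _)
    he.mul_one_sub_self).toRingEquiv

lemma nontrivial_quotient_span_of_isIdempotentElem {e : R} (he : IsIdempotentElem e)
    (h1 : e ≠ 1) : Nontrivial (R ⧸ Ideal.span {e}) :=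
  Ideal.Quotient.nontrivial_iff.2 fun h ↦
    h1 ((IsIdempotentElem.iff_eq_one_of_isUnit (Ideal.span_singleton_eq_top.1 h)).1 he)

/-- Group rings commute with quotients by ideals generated by a coefficient. -/
noncomputable def quotientSpanCoeffEquiv (ψ : R ≃+* MonoidAlgebra A G) {a : A} {e : R}
    (h : coeffHom ψ a = e) : R ⧸ Ideal.span {e} ≃+* MonoidAlgebra (A ⧸ Ideal.span {a}) G :=
  .ofRingHom
    (Ideal.Quotient.lift _ ((mapRingHom G (Ideal.Quotient.mk (Ideal.span {a}))).comp
      (ψ : R →+* MonoidAlgebra A G)) fun x hx ↦ by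
        obtain ⟨y, rfl⟩ := Ideal.mem_span_singleton'.1 hx
        simp [← h, apply_coeffHom, Ideal.Quotient.mk_singleton_self])
    (liftNCRingHom
      (Ideal.quotientMap (Ideal.span {e}) (coeffHom ψ) <| by
        rw [Ideal.span_singleton_le_iff_mem, Ideal.mem_comap, h]
        exact Ideal.mem_span_singleton_self e)
      ((Ideal.Quotient.mk (Ideal.span {e})).toMonoidHom.comp (unitHom ψ)) fun _ _ ↦ .all _ _)
    (by ext x <;> simp [apply_coeffHom, apply_unitHom])
    (by
      ext x
      induction x using coeffHom_mul_unitHom_induction (ψ := ψ) with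
      | hom a g => simp [apply_coeffHom, apply_unitHom]
      | add x y hx hy => simpa only [map_add] using congrArg₂ (· + ·) hx hy)

/-- Group rings commute with products of coefficient rings. -/
noncomputable def prodCoeffEquiv (A B G : Type*) [Semiring A] [Semiring B] [Monoid G] :
    MonoidAlgebra (A × B) G ≃+* MonoidAlgebra A G × MonoidAlgebra B G :=
  .ofBijective ((mapRingHom G (.fst A B)).prod (mapRingHom G (.snd A B))) <| by
    refine ⟨fun x y h ↦ ?_, fun ⟨x, y⟩ ↦ ⟨.ofCoeff (.zipWith Prod.mk rfl x.coeff y.coeff), ?_⟩⟩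
    · have h₁ := congrArg Prod.fst h
      have h₂ := congrArg Prod.snd h
      ext g
      · simpa using congrArg (·.coeff g) h₁
      · simpa using congrArg (·.coeff g) h₂
    · ext g <;> simp

lemma exists_isIdempotentElem_coeffHom_eq [Finite G] [IsReducedOrder R]
    (ψ : R ≃+* MonoidAlgebra A G) {e : R} (he : IsIdempotentElem e) :
    ∃ a : A, IsIdempotentElem a ∧ coeffHom ψ a = e :=
  ⟨augmentation ψ e, he.map _, coeffHom_augmentation_of_isHomogeneous_one
    ((grading ψ).isHomogeneous_one_of_isIdempotentElem he)⟩

end Idempotents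

theorem groupRing_pair_induction.{u, v, w} {G H : Type*} [CommGroup G] [CommGroup H] [Finite G]
    [Finite H] {P : ∀ (A : Type u) (B : Type v) [CommRing A] [CommRing B], Prop}
    (connected : ∀ {R : Type w} {A : Type u} {B : Type v} [CommRing R] [CommRing A] [CommRing B]
      [IsReducedOrder R], IsConnectedRing R → R ≃+* MonoidAlgebra A G →
      R ≃+* MonoidAlgebra B H → P A B)
    (prod : ∀ {A A₁ A₂ : Type u} {B B₁ B₂ : Type v} [CommRing A] [CommRing A₁] [CommRing A₂]
      [CommRing B] [CommRing B₁] [CommRing B₂], A ≃+* A₁ × A₂ → B ≃+* B₁ × B₂ →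
      P A₁ B₁ → P A₂ B₂ → P A B)
    {R : Type w} {A : Type u} {B : Type v} [CommRing R] [CommRing A] [CommRing B]
    [IsReducedOrder R] [Nontrivial R] (ψ : R ≃+* MonoidAlgebra A G)
    (φ : R ≃+* MonoidAlgebra B H) : P A B := by
  by_cases hR : ∀ e : R, IsIdempotentElem e → e = 0 ∨ e = 1
  · exact connected ⟨inferInstance, hR⟩ ψ φ
  push Not at hR
  obtain ⟨e, he, he0, he1⟩ := hR
  obtain ⟨a, ha, hae⟩ := exists_isIdempotentElem_coeffHom_eq ψ he
  obtain ⟨b, hb, hbe⟩ := exists_isIdempotentElem_coeffHom_eq φ he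
  have E := quotientProdQuotientEquiv he
  have := nontrivial_quotient_span_of_isIdempotentElem he he1
  have := nontrivial_quotient_span_of_isIdempotentElem he.one_sub (mt sub_eq_self.1 he0)
  have := IsReducedOrder.fst E
  have := IsReducedOrder.fst (E.trans .prodComm)
  have := finrank_fst_lt E
  have := finrank_fst_lt (E.trans .prodComm)
  have hae' : coeffHom ψ (1 - a) = 1 - e := by rw [map_sub, map_one, hae]
  have hbe' : coeffHom φ (1 - b) = 1 - e := by rw [map_sub, map_one, hbe]
  exact prod (quotientProdQuotientEquiv ha) (quotientProdQuotientEquiv hb)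
    (groupRing_pair_induction connected prod (quotientSpanCoeffEquiv ψ hae)
      (quotientSpanCoeffEquiv φ hbe))
    (groupRing_pair_induction connected prod (quotientSpanCoeffEquiv ψ hae')
      (quotientSpanCoeffEquiv φ hbe'))
termination_by Module.finrank ℤ R

section Comparison

variable {G H : Type*} [CommGroup G] [CommGroup H] [Finite G] [Finite H]

lemma nonempty_mulEquiv_of_prod_mulEquiv_prod {I K L : Type*} [CommGroup I] [CommGroup K]
    [CommGroup L] [Finite I] [Finite K] [Finite L] (e : I × K ≃* I × L) : Nonempty (K ≃* L) :=
  nonempty_mulEquiv_of_cyclicMultiplicity_eq fun q ↦ by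
    simpa only [cyclicMultiplicity_prod, add_right_inj] using cyclicMultiplicity_congr e q

lemma IsConnectedRing.nonempty_ringEquiv_of_mulEquiv {R A B : Type*} [CommRing R] [CommRing A]
    [CommRing B] [IsReducedOrder R] (hR : IsConnectedRing R) (e : G ≃* H)
    (ψ : R ≃+* MonoidAlgebra A G) (φ : R ≃+* MonoidAlgebra B H) : Nonempty (A ≃+* B) := by
  obtain ⟨C, I, K, L, ⟨α⟩, ⟨β⟩, ⟨η⟩, ⟨γ⟩⟩ := hR.exists_common_coefficients ψ φ
  obtain ⟨κ⟩ := nonempty_mulEquiv_of_prod_mulEquiv_prod (η.trans (e.symm.trans γ.symm))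
  exact ⟨α.trans ((mapDomainRingEquiv C κ).trans β.symm)⟩

lemma IsConnectedRing.exists_groupRing_primePowerCyclic.{u} {R : Type*} {A : Type u} {B : Type*}
    [CommRing R] [CommRing A] [CommRing B] [IsReducedOrder R] (hR : IsConnectedRing R)
    (ψ : R ≃+* MonoidAlgebra A G) (φ : R ≃+* MonoidAlgebra B H) {q : Nat.Primes × ℕ}
    (h : cyclicMultiplicity G q < cyclicMultiplicity H q) :
    ∃ (A' : Type u) (_ : CommRing A'), Nonempty (A ≃+* MonoidAlgebra A' (PrimePowerCyclic q)) := by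
  obtain ⟨C, I, K, L, ⟨α⟩, -, ⟨η⟩, ⟨γ⟩⟩ := hR.exists_common_coefficients ψ φ
  rw [← cyclicMultiplicity_congr η, ← cyclicMultiplicity_congr γ, cyclicMultiplicity_prod,
    cyclicMultiplicity_prod, add_lt_add_iff_left] at h
  obtain ⟨K', _, ⟨κ⟩⟩ :=
    exists_mulEquiv_primePowerCyclic_prod ((cyclicMultiplicity_nonneg L q).trans_lt h)
  exact ⟨MonoidAlgebra C K', inferInstance,
    ⟨α.trans ((mapDomainRingEquiv C κ).trans curryRingEquiv)⟩⟩

theorem nonempty_ringEquiv_of_mulEquiv {R A B : Type*} [CommRing R] [CommRing A] [CommRing B]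
    [IsReducedOrder R] [Nontrivial R] (e : G ≃* H) (ψ : R ≃+* MonoidAlgebra A G)
    (φ : R ≃+* MonoidAlgebra B H) : Nonempty (A ≃+* B) :=
  groupRing_pair_induction (P := fun A B _ _ ↦ Nonempty (A ≃+* B))
    (fun hR ψ φ ↦ hR.nonempty_ringEquiv_of_mulEquiv e ψ φ)
    (fun α β ⟨ε₁⟩ ⟨ε₂⟩ ↦ ⟨α.trans ((ε₁.prodCongr ε₂).trans β.symm)⟩) ψ φ

theorem exists_groupRing_primePowerCyclic.{u} {R : Type*} {A : Type u} {B : Type*} [CommRing R]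
    [CommRing A] [CommRing B] [IsReducedOrder R] [Nontrivial R] (ψ : R ≃+* MonoidAlgebra A G)
    (φ : R ≃+* MonoidAlgebra B H) {q : Nat.Primes × ℕ}
    (h : cyclicMultiplicity G q < cyclicMultiplicity H q) :
    ∃ (A' : Type u) (_ : CommRing A'), Nonempty (A ≃+* MonoidAlgebra A' (PrimePowerCyclic q)) :=
  groupRing_pair_induction
    (P := fun (A : Type u) _ _ _ ↦ ∃ (A' : Type u) (_ : CommRing A'),
      Nonempty (A ≃+* MonoidAlgebra A' (PrimePowerCyclic q)))
    (fun hR ψ φ ↦ hR.exists_groupRing_primePowerCyclic ψ φ h)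
    (fun α _ ⟨A₁, _, ⟨ε₁⟩⟩ ⟨A₂, _, ⟨ε₂⟩⟩ ↦ ⟨A₁ × A₂, inferInstance,
      ⟨α.trans ((ε₁.prodCongr ε₂).trans (prodCoeffEquiv ..).symm)⟩⟩) ψ φ

end Comparison

/-! ### Stark rings -/

section Coefficients

variable {R A G : Type*} [CommRing R] [CommRing A] [CommGroup G]

lemma IsReducedOrder.of_ringEquiv_monoidAlgebra [IsReducedOrder R] (ψ : R ≃+* MonoidAlgebra A G) :
    IsReducedOrder A :=
  .of_injective (coeffHom ψ).toNonUnitalRingHom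
    (Function.LeftInverse.injective (g := augmentation ψ) augmentation_coeffHom)

lemma finite_of_ringEquiv_monoidAlgebra [Module.Finite ℤ R] [Nontrivial R]
    (ψ : R ≃+* MonoidAlgebra A G) : Finite G := by
  have := (coeffHom ψ).domain_nontrivial
  have : Module.Finite ℤ (G →₀ A) :=
    .equiv (ψ.toAddEquiv.trans coeffAddEquiv).toIntLinearEquiv
  simpa only [not_isEmpty_of_nonempty, not_subsingleton, false_or] using
    (Module.finite_finsupp_iff.1 this).imp_right (·.imp_right And.right)

lemma finrank_lt_of_ringEquiv_monoidAlgebra [IsReducedOrder R] [Nontrivial R] [Nontrivial G]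
    (ψ : R ≃+* MonoidAlgebra A G) :
    Module.finrank ℤ A < Module.finrank ℤ R := by
  have := (coeffHom ψ).domain_nontrivial
  have := IsReducedOrder.of_ringEquiv_monoidAlgebra ψ
  have := finite_of_ringEquiv_monoidAlgebra ψ
  have := Fintype.ofFinite G
  let E : R ≃ₗ[ℤ] G → A := (ψ.toAddEquiv.trans coeffAddEquiv).toIntLinearEquiv.trans
    (Finsupp.linearEquivFunOnFinite ℤ A G)
  rw [E.finrank_eq, Module.finrank_pi_fintype, Finset.sum_const, smul_eq_mul, Finset.card_univ]
  exact lt_mul_of_one_lt_left Module.finrank_pos Fintype.one_lt_card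

end Coefficients

section Existence

lemma exists_commRing_of_not_isStark {R : Type u} [CommRing R] [Nontrivial R] (hR : ¬ IsStark R) :
    ∃ (A : Type u) (_ : CommRing A) (G : Type u) (_ : CommGroup G),
      Nontrivial G ∧ Nonempty (R ≃+* MonoidAlgebra A G) := by
  simp only [IsStark, not_forall, not_isEmpty_iff] at hR
  obtain ⟨A, _, G, _, hG, ⟨ψ⟩⟩ := hR
  have hcomm (x y : MonoidAlgebra A G) : x * y = y * x :=
    ψ.symm.injective (by rw [map_mul, map_mul, mul_comm])
  have hA (a b : A) : a * b = b * a := by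
    simpa only [single_mul_single, mul_one, single_right_inj] using hcomm (single 1 a) (single 1 b)
  have hM : Nontrivial (MonoidAlgebra A G) := ψ.injective.nontrivial
  have : Nontrivial A := by
    contrapose! hM
    infer_instance
  have hG' (g h : G) : g * h = h * g :=
    of_injective (R := A) (by rw [map_mul, map_mul, hcomm])
  let : CommRing A := { mul_comm := hA }
  let : CommGroup G := { mul_comm := hG' }
  exact ⟨A, inferInstance, G, inferInstance, hG, ⟨ψ⟩⟩

theorem exists_isStark_groupRing (R : Type u) [CommRing R] [IsReducedOrder R] [Nontrivial R] :
    ∃ (A : Type u) (_ : CommRing A) (G : Type u) (_ : CommGroup G) (_ : Finite G),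
      IsStark A ∧ Nonempty (R ≃+* MonoidAlgebra A G) := by
  by_cases hR : IsStark R
  · exact ⟨R, inferInstance, PUnit, inferInstance, inferInstance, hR,
      ⟨(uniqueRingEquiv PUnit).symm⟩⟩
  obtain ⟨A, _, G, _, _, ⟨ψ⟩⟩ := exists_commRing_of_not_isStark hR
  have := (coeffHom ψ).domain_nontrivial
  have := IsReducedOrder.of_ringEquiv_monoidAlgebra ψ
  have := finite_of_ringEquiv_monoidAlgebra ψ
  have := finrank_lt_of_ringEquiv_monoidAlgebra ψ
  obtain ⟨A', _, G', _, _, hA', ⟨φ⟩⟩ := exists_isStark_groupRing A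
  exact ⟨A', inferInstance, G × G', inferInstance, inferInstance, hA',
    ⟨ψ.trans ((mapRingEquiv G φ).trans curryRingEquiv.symm)⟩⟩
termination_by Module.finrank ℤ R

end Existence

lemma cyclicMultiplicity_le_of_isStark {R B G H : Type*} {A : Type u} [CommRing R] [CommRing A]
    [CommRing B] [CommGroup G] [CommGroup H] [Finite G] [Finite H] [IsReducedOrder R]
    [Nontrivial R] (hA : IsStark A) (ψ : R ≃+* MonoidAlgebra A G) (φ : R ≃+* MonoidAlgebra B H)
    (q : Nat.Primes × ℕ) : cyclicMultiplicity H q ≤ cyclicMultiplicity G q := by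
  by_contra! h
  obtain ⟨A', _, ⟨ε⟩⟩ := exists_groupRing_primePowerCyclic ψ φ h
  exact (hA A' inferInstance (ULift.{u} (PrimePowerCyclic q)) inferInstance inferInstance).false
    (ε.trans (mapDomainRingEquiv A' MulEquiv.ulift.symm))

end Stark

/-- Every non-zero reduced order `R` is isomorphic to a group ring `A[G]`
with `A` a stark ring and `G` a finite abelian group, and such `A` and `G` are unique
up to ring isomorphism, respectively group isomorphism. -/
theorem exists_unique_stark_groupring
    {R : Type u} [CommRing R] [Nontrivial R] [Module.Free ℤ R] [Module.Finite ℤ R]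
    [IsReduced R] :
    ∃ (A : Type u) (_ : CommRing A) (G : Type u) (_ : CommGroup G) (_ : Finite G),
      IsStark A ∧ Nonempty (R ≃+* MonoidAlgebra A G) ∧
        ∀ (B : Type u) (_ : CommRing B) (H : Type u) (_ : CommGroup H) (_ : Finite H),
          IsStark B → Nonempty (R ≃+* MonoidAlgebra B H) →
            Nonempty (A ≃+* B) ∧ Nonempty (G ≃* H) := by
  have : Stark.IsReducedOrder R := { }
  obtain ⟨A, _, G, _, _, hA, ⟨ψ⟩⟩ := Stark.exists_isStark_groupRing R
  refine ⟨A, inferInstance, G, inferInstance, inferInstance, hA, ⟨ψ⟩, ?_⟩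
  rintro B _ H _ _ hB ⟨φ⟩
  obtain ⟨e⟩ : Nonempty (G ≃* H) := Stark.nonempty_mulEquiv_of_cyclicMultiplicity_eq fun q ↦
    le_antisymm (Stark.cyclicMultiplicity_le_of_isStark hB φ ψ q)
      (Stark.cyclicMultiplicity_le_of_isStark hA ψ φ q)
  exact ⟨Stark.nonempty_ringEquiv_of_mulEquiv e ψ φ, ⟨e⟩⟩
end
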